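/- arXiv:1406.3263 — 3 statements merged into one kernel-verified Lean document; each statement's English description precedes it below -/
import Mathlib

section
/- Consider a graph-directed construction whose directed graph G is strongly connected, i.e. for all vertices u, v there is a directed path from u to v. Suppose t_0 ≥ 0 is such that the spectral radius of the matrix A^{t_0} equals 1. Then the Hausdorff dimension of K* = ⋃_{u=1}^n C_u equals t_0. -/
open Set
open scoped Classical

section Perron

variable {V : Type*} [Fintype V]

lemma Matrix.mulVec_nonneg_of_nonneg {A : Matrix V V ℝ} (hA : ∀ u v, 0 ≤ A u v) {x : V → ℝ}
    (hx : 0 ≤ x) : 0 ≤ A.mulVec x :=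
  fun u => Finset.sum_nonneg fun v _ => mul_nonneg (hA u v) (hx v)

variable [DecidableEq V]

lemma Matrix.one_add_pow_mulVec_nonneg {A : Matrix V V ℝ} (hA : ∀ u v, 0 ≤ A u v) {x : V → ℝ}
    (hx : 0 ≤ x) (k : ℕ) : 0 ≤ ((1 + A) ^ k).mulVec x := by
  induction k with
  | zero => simpa using hx
  | succ k ih =>
    rw [pow_succ', ← Matrix.mulVec_mulVec, Matrix.add_mulVec, Matrix.one_mulVec]
    exact add_nonneg ih (Matrix.mulVec_nonneg_of_nonneg hA ih)

lemma Matrix.monotone_one_add_pow_mulVec {A : Matrix V V ℝ} (hA : ∀ u v, 0 ≤ A u v) {x : V → ℝ}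
    (hx : 0 ≤ x) : Monotone fun k : ℕ => ((1 + A) ^ k).mulVec x := by
  refine monotone_nat_of_le_succ fun k => ?_
  rw [pow_succ', ← Matrix.mulVec_mulVec, Matrix.add_mulVec, Matrix.one_mulVec]
  exact le_add_of_nonneg_right
    (Matrix.mulVec_nonneg_of_nonneg hA (Matrix.one_add_pow_mulVec_nonneg hA hx k))

lemma Matrix.exists_one_add_pow_mulVec_pos {A : Matrix V V ℝ} (hA : ∀ u v, 0 ≤ A u v)
    (hconn : ∀ u v, Relation.ReflTransGen (fun u v => 0 < A u v) u v) {x : V → ℝ}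
    (hx : 0 ≤ x) (hx0 : x ≠ 0) : ∃ N : ℕ, ∀ u, 0 < ((1 + A) ^ N).mulVec x u := by
  obtain ⟨v, hv⟩ : ∃ v, x v ≠ 0 := Function.ne_iff.mp hx0
  have hex : ∀ u, ∃ k : ℕ, 0 < ((1 + A) ^ k).mulVec x u := by
    intro u
    induction hconn u v using Relation.ReflTransGen.head_induction_on with
    | refl => exact ⟨0, by simpa using lt_of_le_of_ne (hx v) (Ne.symm hv)⟩
    | head huw _ ih =>
      rename_i a b _
      obtain ⟨k, hk⟩ := ih
      refine ⟨k + 1, ?_⟩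
      have hnn := Matrix.one_add_pow_mulVec_nonneg hA hx k
      rw [pow_succ', ← Matrix.mulVec_mulVec, Matrix.add_mulVec, Matrix.one_mulVec]
      refine add_pos_of_nonneg_of_pos (hnn a) (lt_of_lt_of_le (mul_pos huw hk) ?_)
      exact Finset.single_le_sum
        (f := fun w => A a w * ((1 + A) ^ k).mulVec x w)
        (fun w _ => mul_nonneg (hA a w) (hnn w)) (Finset.mem_univ b)
  choose k hk using hex
  exact ⟨Finset.univ.sup k, fun u => (hk u).trans_le
    (Matrix.monotone_one_add_pow_mulVec hA hx (Finset.le_sup (Finset.mem_univ u)) u)⟩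

attribute [local instance] Matrix.linftyOpNormedRing Matrix.linftyOpNormedAlgebra

lemma Matrix.le_spectralRadius_of_smul_le_mulVec {A : Matrix V V ℝ} (hA : ∀ u v, 0 ≤ A u v)
    {w : V → ℝ} (hw : 0 ≤ w) (hw0 : w ≠ 0) {l : ℝ} (hl : 1 < l) (hle : l • w ≤ A.mulVec w) :
    spectralRadius ℂ (A.map ((↑) : ℝ → ℂ)) ≠ 1 := by
  intro hspec
  obtain ⟨u, hu⟩ : ∃ v, w v ≠ 0 := Function.ne_iff.mp hw0
  have hu : 0 < w u := lt_of_le_of_ne (hw u) (Ne.symm hu)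
  have hpow : ∀ k : ℕ, l ^ k • w ≤ (A ^ k).mulVec w := by
    intro k
    induction k with
    | zero => simp
    | succ k ih =>
      have h1 : A.mulVec (l ^ k • w) ≤ A.mulVec ((A ^ k).mulVec w) := by
        rw [← sub_nonneg, ← Matrix.mulVec_sub]
        exact Matrix.mulVec_nonneg_of_nonneg hA (sub_nonneg.mpr ih)
      rw [pow_succ' A, ← Matrix.mulVec_mulVec]
      refine le_trans ?_ h1
      rw [Matrix.mulVec_smul, pow_succ, mul_smul]
      exact smul_le_smul_of_nonneg_left hle (by positivity)
  set B : Matrix V V ℂ := A.map ((↑) : ℝ → ℂ) with hB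
  set wc : V → ℂ := fun v => (w v : ℂ) with hwc
  have hnorm : ∀ k : ℕ, l ^ k * w u ≤ ‖B ^ k‖ * ‖wc‖ := by
    intro k
    have h1 : (B ^ k).mulVec wc u = (((A ^ k).mulVec w u : ℝ) : ℂ) := by
      have : B ^ k = (A ^ k).map ((↑) : ℝ → ℂ) :=
        (Matrix.map_pow A Complex.ofRealHom k).symm
      rw [this]
      simp [Matrix.mulVec, dotProduct, hwc]
    calc l ^ k * w u ≤ (A ^ k).mulVec w u := hpow k u
      _ ≤ ‖(B ^ k).mulVec wc u‖ := by
          rw [h1, Complex.norm_real]; exact le_abs_self _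
      _ ≤ ‖(B ^ k).mulVec wc‖ := norm_le_pi_norm _ u
      _ ≤ _ := Matrix.linfty_opNorm_mulVec _ _
  obtain ⟨m, hm1, hml⟩ := exists_between hl
  have hm0 : 0 < m := by linarith
  have hlim := spectrum.pow_nnnorm_pow_one_div_tendsto_nhds_spectralRadius B
  rw [hspec] at hlim
  have hev := hlim.eventually_lt_const (u := ENNReal.ofReal m) (by simpa using hm1)
  have hbig := (tendsto_pow_atTop_atTop_of_one_lt
    (show 1 < l / m by rwa [one_lt_div hm0])).eventually_gt_atTop (‖wc‖ / w u)
  obtain ⟨k, ⟨hk1, hk2⟩, hk0⟩ := ((hev.and hbig).and (Filter.eventually_gt_atTop 0)).exists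
  have hBk : ‖B ^ k‖ ≤ m ^ k := by
    have h2 := ENNReal.rpow_le_rpow hk1.le (show (0 : ℝ) ≤ k by positivity)
    rw [← ENNReal.rpow_mul, one_div, inv_mul_cancel₀ (by positivity), ENNReal.rpow_one,
      ENNReal.rpow_natCast, ← ENNReal.ofReal_pow hm0.le] at h2
    have h3 : ENNReal.ofReal ‖B ^ k‖ ≤ ENNReal.ofReal (m ^ k) := by
      rwa [ofReal_norm]
    exact (ENNReal.ofReal_le_ofReal_iff (by positivity)).mp h3
  have h4 := (hnorm k).trans (mul_le_mul_of_nonneg_right hBk (norm_nonneg wc))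
  rw [div_pow, div_lt_div_iff₀ hu (by positivity)] at hk2
  linarith

/-- An irreducible nonnegative matrix with spectral radius `1` has a positive fixed vector. -/
lemma Matrix.exists_pos_mulVec_eq_self {A : Matrix V V ℝ} (hA : ∀ u v, 0 ≤ A u v)
    (hconn : ∀ u v, Relation.ReflTransGen (fun u v => 0 < A u v) u v)
    (hspec : spectralRadius ℂ (A.map ((↑) : ℝ → ℂ)) = 1) :
    ∃ y : V → ℝ, (∀ u, 0 < y u) ∧ A.mulVec y = y := by
  obtain ⟨y, hy, hy0, hAy⟩ : ∃ y : V → ℝ, 0 ≤ y ∧ y ≠ 0 ∧ y ≤ A.mulVec y := by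
    have hne : (spectrum ℂ (A.map ((↑) : ℝ → ℂ))).Nonempty := by
      by_contra h
      rw [Set.not_nonempty_iff_eq_empty] at h
      simp [spectralRadius, h] at hspec
    obtain ⟨μ, hμ, hμn⟩ := spectrum.exists_nnnorm_eq_spectralRadius_of_nonempty hne
    rw [hspec] at hμn
    have hμ1 : ‖μ‖ = 1 := by
      have : ‖μ‖₊ = 1 := by exact_mod_cast hμn
      simpa using congrArg NNReal.toReal this
    rw [← Matrix.spectrum_toLin', ← Module.End.hasEigenvalue_iff_mem_spectrum] at hμ
    obtain ⟨z, hz⟩ := hμ.exists_hasEigenvector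
    have hz1 := hz.apply_eq_smul
    rw [Matrix.toLin'_apply] at hz1
    refine ⟨fun u => ‖z u‖, fun u => norm_nonneg _, fun h => hz.2 ?_, fun u => ?_⟩
    · ext u
      simpa using congrFun h u
    · have h1 := congrFun hz1 u
      calc ‖z u‖ = ‖(μ • z) u‖ := by simp [hμ1]
        _ = ‖∑ v, (A u v : ℂ) * z v‖ := by rw [← h1]; rfl
        _ ≤ ∑ v, ‖(A u v : ℂ) * z v‖ := norm_sum_le _ _
        _ = ∑ v, A u v * ‖z v‖ := by
          refine Finset.sum_congr rfl fun v _ => ?_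
          rw [norm_mul, Complex.norm_real, Real.norm_of_nonneg (hA u v)]
  have heq : A.mulVec y = y := by
    by_contra hne
    obtain ⟨N, hN⟩ := Matrix.exists_one_add_pow_mulVec_pos hA hconn (sub_nonneg.mpr hAy)
      (sub_ne_zero.mpr hne)
    set w := ((1 + A) ^ N).mulVec y with hw
    have hcomm : ((1 + A) ^ N).mulVec (A.mulVec y - y) = A.mulVec w - w := by
      rw [Matrix.mulVec_sub, hw, Matrix.mulVec_mulVec, Matrix.mulVec_mulVec]
      have : Commute ((1 + A) ^ N) A :=
        ((Commute.one_left A).add_left (Commute.refl A)).pow_left N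
      rw [this.eq]
    rw [hcomm] at hN
    have hyw : y ≤ w := by
      simpa using Matrix.monotone_one_add_pow_mulVec hA hy (Nat.zero_le N)
    have hw0 : w ≠ 0 := fun h => hy0 (le_antisymm (h ▸ hyw) hy)
    have hev : ∀ᶠ l in nhdsWithin (1 : ℝ) (Ioi 1), ∀ u, l * w u < A.mulVec w u := by
      refine Filter.eventually_all.mpr fun u => Filter.Eventually.filter_mono nhdsWithin_le_nhds ?_
      have hc : Filter.Tendsto (fun l : ℝ => l * w u) (nhds 1) (nhds (1 * w u)) :=
        (continuous_id.mul continuous_const).tendsto 1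
      exact hc.eventually_lt_const (by have := hN u; simp at this; simpa using this)
    obtain ⟨l, hl, hl1⟩ := (hev.and self_mem_nhdsWithin).exists
    exact Matrix.le_spectralRadius_of_smul_le_mulVec hA (hy.trans hyw) hw0 hl1
      (fun u => (hl u).le) hspec
  obtain ⟨N, hN⟩ := Matrix.exists_one_add_pow_mulVec_pos hA hconn hy hy0
  have hfix : ∀ k : ℕ, ((1 + A) ^ k).mulVec y = (2 : ℝ) ^ k • y := by
    intro k
    induction k with
    | zero => simp
    | succ k ih =>
      rw [pow_succ', ← Matrix.mulVec_mulVec, ih, Matrix.mulVec_smul, Matrix.add_mulVec, heq,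
        Matrix.one_mulVec, pow_succ, mul_smul, two_smul]
  refine ⟨y, fun u => ?_, heq⟩
  have := hN u
  rw [hfix] at this
  exact pos_of_mul_pos_right this (by positivity)

end Perron

section GraphDirected

variable {V : Type} [Fintype V] {E : V → V → Prop} {r : V → V → ℝ} {f : V → V → ℝ → ℝ}
  {C : V → Set ℝ}

/-- The attractor of a graph-directed system of contractions lies in every invariant vector of
nonempty compact sets. -/
lemma graphDirected_attractor_subset (hr : ∀ u v, E u v → 0 < r u v ∧ r u v < 1)
    (hdist : ∀ u v, E u v → ∀ x y, dist (f u v x) (f u v y) = r u v * dist x y)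
    (hC : ∀ u, (C u).Nonempty ∧ IsCompact (C u))
    (hCattr : ∀ u, C u = ⋃ (v : V) (_ : E u v), f u v '' C v)
    {J : V → Set ℝ} (hJ : ∀ u, (J u).Nonempty ∧ IsCompact (J u))
    (hinv : ∀ u v, E u v → f u v '' J v ⊆ J u) (u : V) : C u ⊆ J u := by
  have hmax : ∀ u, ∃ x ∈ C u, ∀ y ∈ C u, Metric.infDist y (J u) ≤ Metric.infDist x (J u) :=
    fun u => (hC u).2.exists_isMaxOn (hC u).1 (Metric.continuous_infDist_pt (J u)).continuousOn
  choose p hp hpmax using hmax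
  have : Nonempty V := ⟨u⟩
  obtain ⟨w, hw⟩ := Finite.exists_max fun u => Metric.infDist (p u) (J u)
  have hw0 : Metric.infDist (p w) (J w) ≤ 0 := by
    have hpw := hp w
    rw [hCattr w] at hpw
    simp only [mem_iUnion, mem_image] at hpw
    obtain ⟨v, hv, x, hx, hfx⟩ := hpw
    obtain ⟨z, hz, hxz⟩ := (hJ v).2.exists_infDist_eq_dist (hJ v).1 x
    have h1 : Metric.infDist (p w) (J w) ≤ r w v * Metric.infDist x (J v) := by
      rw [hxz, ← hdist w v hv, hfx]
      exact Metric.infDist_le_dist_of_mem (hinv w v hv (mem_image_of_mem _ hz))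
    have h2 : Metric.infDist x (J v) ≤ Metric.infDist (p w) (J w) := (hpmax v x hx).trans (hw v)
    have h3 := mul_le_mul_of_nonneg_left h2 (hr w v hv).1.le
    nlinarith [(hr w v hv).2]
  intro x hx
  rw [← (hJ u).2.isClosed.closure_eq, Metric.mem_closure_iff_infDist_zero (hJ u).1]
  exact le_antisymm ((hpmax u x hx).trans ((hw u).trans hw0)) Metric.infDist_nonneg

lemma exists_uniform_ratio_lt_one (hr : ∀ u v, E u v → 0 < r u v ∧ r u v < 1) :
    ∃ q : ℝ, 0 < q ∧ q < 1 ∧ ∀ u v, E u v → r u v ≤ q := by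
  have h1 : ∀ᶠ q in nhdsWithin (1 : ℝ) (Iio 1), ∀ u v, E u v → r u v ≤ q := by
    refine Filter.eventually_all.mpr fun u => Filter.eventually_all.mpr fun v =>
      Filter.Eventually.filter_mono nhdsWithin_le_nhds ?_
    by_cases h : E u v
    · filter_upwards [eventually_gt_nhds (hr u v h).2] with q hq _ using hq.le
    · exact Filter.Eventually.of_forall fun _ h' => absurd h' h
  have h2 : ∀ᶠ q in nhdsWithin (1 : ℝ) (Iio 1), 0 < q :=
    Filter.Eventually.filter_mono nhdsWithin_le_nhds (eventually_gt_nhds one_pos)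
  obtain ⟨q, ⟨hq1, hq2⟩, hq3⟩ := ((h1.and h2).and self_mem_nhdsWithin).exists
  exact ⟨q, hq2, hq3, hq1⟩

/-- Iterating the construction `k` times covers each `C u` by finitely many small pieces, with
controlled sum of `t`-th powers of diameters. -/
lemma graphDirected_exists_cover (hr : ∀ u v, E u v → 0 < r u v ∧ r u v < 1)
    (hdist : ∀ u v, E u v → ∀ x y, dist (f u v x) (f u v y) = r u v * dist x y)
    (hCattr : ∀ u, C u = ⋃ (v : V) (_ : E u v), f u v '' C v)
    {t : ℝ} (ht : 0 ≤ t) {y : V → ℝ} (hy : ∀ u, 0 < y u)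
    (hAy : ∀ u, ∑ v with E u v, r u v ^ t * y v = y u)
    {q : ℝ} (hq0 : 0 < q) (hq : ∀ u v, E u v → r u v ≤ q) {D M : ℝ}
    (hD : ∀ u, Metric.ediam (C u) ≤ ENNReal.ofReal D) (hM : 0 ≤ M)
    (hDM : ∀ u, ENNReal.ofReal D ^ t ≤ ENNReal.ofReal (M * y u)) (k : ℕ) (u : V) :
    ∃ (ι : Type) (_ : Fintype ι) (s : ι → Set ℝ), C u ⊆ ⋃ i, s i ∧
      (∀ i, Metric.ediam (s i) ≤ ENNReal.ofReal (q ^ k * D)) ∧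
      ∑ i, Metric.ediam (s i) ^ t ≤ ENNReal.ofReal (M * y u) := by
  induction k generalizing u with
  | zero =>
    refine ⟨Unit, inferInstance, fun _ => C u, by simp [iUnion_const],
      fun _ => by simpa using hD u, ?_⟩
    simpa using (ENNReal.rpow_le_rpow (hD u) ht).trans (hDM u)
  | succ k ih =>
    choose ι hι s hs1 hs2 hs3 using ih
    have hdiam : ∀ v, E u v → ∀ S : Set ℝ,
        Metric.ediam (f u v '' S) ≤ ENNReal.ofReal (r u v) * Metric.ediam S := by
      intro v hv S
      refine LipschitzWith.ediam_image_le (K := (r u v).toNNReal)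
        (LipschitzWith.of_dist_le_mul fun a b => ?_) S
      rw [hdist u v hv, Real.coe_toNNReal _ (hr u v hv).1.le]
    refine ⟨Σ v : {v // E u v}, ι v, inferInstance, fun i => f u i.1 '' s i.1 i.2, ?_, ?_, ?_⟩
    · rw [hCattr u]
      refine iUnion₂_subset fun v hv => ?_
      rintro _ ⟨x, hx, rfl⟩
      obtain ⟨i, hi⟩ := mem_iUnion.mp (hs1 v hx)
      exact mem_iUnion.mpr ⟨⟨⟨v, hv⟩, i⟩, mem_image_of_mem _ hi⟩
    · rintro ⟨⟨v, hv⟩, i⟩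
      refine (hdiam v hv _).trans ?_
      rw [pow_succ', mul_assoc, ENNReal.ofReal_mul hq0.le]
      exact mul_le_mul' (ENNReal.ofReal_le_ofReal (hq u v hv)) (hs2 v i)
    · rw [Fintype.sum_sigma]
      calc ∑ v : {v // E u v}, ∑ i, Metric.ediam (f u v '' s v i) ^ t
          ≤ ∑ v : {v // E u v}, ENNReal.ofReal (M * (r u v ^ t * y v)) := by
            refine Finset.sum_le_sum fun v _ => ?_
            have hrv := (hr u v v.2).1
            calc ∑ i, Metric.ediam (f u v '' s v i) ^ t
                ≤ ∑ i, ENNReal.ofReal (r u v ^ t) * Metric.ediam (s v i) ^ t := by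
                  refine Finset.sum_le_sum fun i _ => ?_
                  rw [← ENNReal.ofReal_rpow_of_nonneg hrv.le ht,
                    ← ENNReal.mul_rpow_of_nonneg _ _ ht]
                  exact ENNReal.rpow_le_rpow (hdiam v v.2 _) ht
              _ ≤ ENNReal.ofReal (r u v ^ t) * ENNReal.ofReal (M * y v) := by
                  rw [← Finset.mul_sum]
                  exact mul_le_mul_right (hs3 v) _
              _ = _ := by
                  rw [← ENNReal.ofReal_mul (by positivity)]
                  ring_nf
        _ = ENNReal.ofReal (M * y u) := by
            rw [← ENNReal.ofReal_sum_of_nonneg fun v _ => ?_, ← Finset.mul_sum, ← hAy u,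
              Finset.sum_subtype (Finset.univ.filter (E u)) (p := E u) (by simp)]
            have hrv := (hr u v v.2).1
            have hyv := hy v
            positivity

lemma graphDirected_dimH_le (hr : ∀ u v, E u v → 0 < r u v ∧ r u v < 1)
    (hdist : ∀ u v, E u v → ∀ x y, dist (f u v x) (f u v y) = r u v * dist x y)
    (hC : ∀ u, IsCompact (C u))
    (hCattr : ∀ u, C u = ⋃ (v : V) (_ : E u v), f u v '' C v)
    {t : ℝ} (ht : 0 ≤ t) {y : V → ℝ} (hy : ∀ u, 0 < y u)
    (hAy : ∀ u, ∑ v with E u v, r u v ^ t * y v = y u) (u : V) :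
    dimH (C u) ≤ ENNReal.ofReal t := by
  obtain ⟨q, hq0, hq1, hq⟩ := exists_uniform_ratio_lt_one hr
  obtain ⟨D, hD0, hD⟩ : ∃ D : ℝ, 0 ≤ D ∧ ∀ u, Metric.ediam (C u) ≤ ENNReal.ofReal D := by
    refine ⟨∑ u, (Metric.ediam (C u)).toReal,
      Finset.sum_nonneg fun _ _ => ENNReal.toReal_nonneg, fun u => ?_⟩
    rw [← ENNReal.ofReal_toReal (hC u).isBounded.ediam_ne_top]
    exact ENNReal.ofReal_le_ofReal (Finset.single_le_sum
      (f := fun u => (Metric.ediam (C u)).toReal)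
      (fun _ _ => ENNReal.toReal_nonneg) (Finset.mem_univ u))
  obtain ⟨M, hM0, hM⟩ : ∃ M : ℝ, 0 ≤ M ∧ ∀ u, D ^ t ≤ M * y u := by
    have h : ∀ᶠ M : ℝ in Filter.atTop, ∀ u, D ^ t ≤ M * y u :=
      Filter.eventually_all.mpr fun u =>
        (Filter.tendsto_id.atTop_mul_const (hy u)).eventually_ge_atTop (D ^ t)
    obtain ⟨M, h1, h2⟩ := (h.and (Filter.eventually_ge_atTop 0)).exists
    exact ⟨M, h2, h1⟩
  choose ι hι s hs1 hs2 hs3 using fun k => graphDirected_exists_cover hr hdist hCattr ht hy hAy hq0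
    hq hD hM0 (fun u => by
      rw [ENNReal.ofReal_rpow_of_nonneg hD0 ht]
      exact ENNReal.ofReal_le_ofReal (hM u)) k u
  have hlim : Filter.Tendsto (fun k : ℕ => ENNReal.ofReal (q ^ k * D)) Filter.atTop (nhds 0) := by
    have := ENNReal.tendsto_ofReal
      ((tendsto_pow_atTop_nhds_zero_of_lt_one hq0.le hq1).mul_const D)
    simpa using this
  have hμ := MeasureTheory.Measure.hausdorffMeasure_le_liminf_sum t (C u) _ hlim s
    (Filter.Eventually.of_forall hs2) (Filter.Eventually.of_forall hs1)
  have hμ' : MeasureTheory.Measure.hausdorffMeasure t (C u) ≤ ENNReal.ofReal (M * y u) :=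
    hμ.trans ((Filter.liminf_le_liminf (Filter.Eventually.of_forall hs3)).trans
      (Filter.liminf_const _).le)
  refine dimH_le_of_hausdorffMeasure_ne_top (d := t.toNNReal) ?_
  rw [Real.coe_toNNReal t ht]
  exact ne_top_of_le_ne_top ENNReal.ofReal_ne_top hμ'

lemma exists_uniform_gap (hfC : ∀ u v, E u v → IsCompact (f u v '' C v))
    (hsep : ∀ u v v', E u v → E u v' → v ≠ v' → Disjoint (f u v '' C v) (f u v' '' C v')) :
    ∃ g : ℝ, 0 < g ∧ ∀ u v v', E u v → E u v' → v ≠ v' →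
      ∀ x ∈ f u v '' C v, ∀ y ∈ f u v' '' C v', g ≤ dist x y := by
  have h : ∀ᶠ g in nhdsWithin (0 : ℝ) (Ioi 0), ∀ u v v', E u v → E u v' → v ≠ v' →
      ∀ x ∈ f u v '' C v, ∀ y ∈ f u v' '' C v', g ≤ dist x y := by
    refine Filter.eventually_all.mpr fun u => Filter.eventually_all.mpr fun v =>
      Filter.eventually_all.mpr fun v' => ?_
    by_cases hE : E u v ∧ E u v' ∧ v ≠ v'
    · obtain ⟨h1, h2, h3⟩ := hE
      obtain ⟨g, hg, hgd⟩ := Metric.exists_pos_forall_lt_edist (hfC u v h1)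
        (hfC u v' h2).isClosed (hsep u v v' h1 h2 h3)
      filter_upwards [Filter.Eventually.filter_mono nhdsWithin_le_nhds
        (eventually_lt_nhds (b := (g : ℝ)) (by exact_mod_cast hg))] with e he _ _ _ x hx y hy
      have := hgd x hx y hy
      rw [edist_dist, ENNReal.lt_ofReal_iff_toReal_lt ENNReal.coe_ne_top] at this
      exact he.le.trans this.le
    · exact Filter.Eventually.of_forall fun _ h1 h2 h3 => absurd ⟨h1, h2, h3⟩ hE
  obtain ⟨g, hg1, hg0⟩ := (h.and self_mem_nhdsWithin).exists
  exact ⟨g, hg0, hg1⟩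

/-- Every finite cover of `C u` has `t`-th power sum of diameters bounded below. -/
lemma graphDirected_le_sum_of_cover (hr : ∀ u v, E u v → 0 < r u v ∧ r u v < 1)
    (hdist : ∀ u v, E u v → ∀ x y, dist (f u v x) (f u v y) = r u v * dist x y)
    (hC : ∀ u, (C u).Nonempty)
    (hCattr : ∀ u, C u = ⋃ (v : V) (_ : E u v), f u v '' C v)
    {t : ℝ} (ht : 0 ≤ t) {y : V → ℝ}
    (hAy : ∀ u, ∑ v with E u v, r u v ^ t * y v = y u)
    {q : ℝ} (hq0 : 0 < q) (hq : ∀ u v, E u v → r u v ≤ q)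
    {g : ℝ} (hg0 : 0 < g) (hg : ∀ u v v', E u v → E u v' → v ≠ v' →
      ∀ x ∈ f u v '' C v, ∀ y ∈ f u v' '' C v', g ≤ dist x y)
    {c : ℝ} (hc : ∀ u, c * y u ≤ g ^ t) {ι : Type*} (k : ℕ) (u : V)
    (I : Finset ι) (U : ι → Set ℝ) (b : ι → ℝ) (hb : ∀ i ∈ I, q ^ k * g ≤ b i)
    (hU : ∀ i ∈ I, ∀ x ∈ U i, ∀ y ∈ U i, dist x y ≤ b i) (hcov : C u ⊆ ⋃ i ∈ I, U i) :
    c * y u ≤ ∑ i ∈ I, b i ^ t := by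
  induction k generalizing u I U b with
  | zero =>
    obtain ⟨x, hx⟩ := hC u
    obtain ⟨i, hi, -⟩ := mem_iUnion₂.mp (hcov hx)
    have hbg : ∀ i ∈ I, g ≤ b i := fun i hi => by simpa using hb i hi
    calc c * y u ≤ g ^ t := hc u
      _ ≤ b i ^ t := Real.rpow_le_rpow hg0.le (hbg i hi) ht
      _ ≤ _ := Finset.single_le_sum (f := fun i => b i ^ t)
        (fun j hj => Real.rpow_nonneg (hg0.le.trans (hbg j hj)) t) hi
  | succ k ih =>
    have hbpos : ∀ i ∈ I, 0 < b i := fun i hi => lt_of_lt_of_le (by positivity) (hb i hi)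
    by_cases hbig : ∃ i ∈ I, g ≤ b i
    · obtain ⟨i, hi, hgi⟩ := hbig
      calc c * y u ≤ g ^ t := hc u
        _ ≤ b i ^ t := Real.rpow_le_rpow hg0.le hgi ht
        _ ≤ _ := Finset.single_le_sum (f := fun i => b i ^ t)
          (fun j hj => Real.rpow_nonneg (hbpos j hj).le t) hi
    push Not at hbig
    set K : V → Finset ι := fun v => I.filter fun i => (U i ∩ f u v '' C v).Nonempty with hK
    have hstep : ∀ v, E u v → c * y v ≤ ∑ i ∈ K v, (b i / r u v) ^ t := by
      intro v hv
      obtain ⟨hr0, -⟩ := hr u v hv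
      refine ih v (K v) (fun i => f u v ⁻¹' U i) (fun i => b i / r u v) ?_ ?_ ?_
      · intro i hi
        rw [le_div_iff₀ hr0]
        refine le_trans ?_ (hb i (Finset.mem_filter.mp hi).1)
        rw [pow_succ]
        have := mul_le_mul_of_nonneg_left (hq u v hv) (show 0 ≤ q ^ k * g by positivity)
        linarith
      · intro i hi x hx z hz
        have := hU i (Finset.mem_filter.mp hi).1 _ hx _ hz
        rw [hdist u v hv] at this
        rwa [le_div_iff₀ hr0, mul_comm]
      · intro x hx
        have hfx : f u v x ∈ C u := by
          rw [hCattr u]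
          exact mem_iUnion₂.mpr ⟨v, hv, mem_image_of_mem _ hx⟩
        obtain ⟨i, hi, hxi⟩ := mem_iUnion₂.mp (hcov hfx)
        exact mem_iUnion₂.mpr
          ⟨i, Finset.mem_filter.mpr ⟨hi, _, hxi, mem_image_of_mem _ hx⟩, hxi⟩
    have hdisj : ((Finset.univ.filter (E u) : Finset V) : Set V).PairwiseDisjoint K := by
      intro v hv v' hv' hne
      refine Finset.disjoint_left.mpr fun i hi hi' => ?_
      obtain ⟨hiI, x, hxU, hx⟩ := Finset.mem_filter.mp hi
      obtain ⟨-, z, hzU, hz⟩ := Finset.mem_filter.mp hi'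
      have h1 := hg u v v' (by simpa using hv) (by simpa using hv') hne x hx z hz
      exact absurd (h1.trans (hU i hiI x hxU z hzU)) (not_le.mpr (hbig i hiI))
    calc c * y u = ∑ v with E u v, r u v ^ t * (c * y v) := by
          rw [← hAy u, Finset.mul_sum]
          exact Finset.sum_congr rfl fun v _ => by ring
      _ ≤ ∑ v with E u v, ∑ i ∈ K v, b i ^ t := by
          refine Finset.sum_le_sum fun v hv => ?_
          have hv : E u v := (Finset.mem_filter.mp hv).2
          have hr0 := (hr u v hv).1
          refine (mul_le_mul_of_nonneg_left (hstep v hv) (by positivity)).trans_eq ?_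
          rw [Finset.mul_sum]
          refine Finset.sum_congr rfl fun i hi => ?_
          rw [Real.div_rpow (hbpos i (Finset.mem_filter.mp hi).1).le hr0.le,
            mul_div_cancel₀ _ (by positivity)]
      _ = ∑ i ∈ (Finset.univ.filter (E u)).biUnion K, b i ^ t := (Finset.sum_biUnion hdisj).symm
      _ ≤ ∑ i ∈ I, b i ^ t :=
          Finset.sum_le_sum_of_subset_of_nonneg
            (Finset.biUnion_subset.mpr fun v _ => Finset.filter_subset _ _)
            fun i hi _ => Real.rpow_nonneg (hbpos i hi).le t

/-- A compact set has Hausdorff dimension at least `t` as soon as the `t`-th power sums over its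
finite covers are bounded away from zero. -/
lemma IsCompact.le_dimH_of_forall_finite_cover {K : Set ℝ} (hK : IsCompact K) {t : ℝ} (ht : 0 < t)
    {m : ℝ} (hm : 0 < m)
    (h : ∀ (I : Finset ℕ) (U : ℕ → Set ℝ) (b : ℕ → ℝ), (∀ i, 0 < b i) →
      (∀ i, ∀ x ∈ U i, ∀ y ∈ U i, dist x y ≤ b i) → K ⊆ ⋃ i ∈ I, U i → m ≤ ∑ i ∈ I, b i ^ t) :
    ENNReal.ofReal t ≤ dimH K := by
  refine le_dimH_of_hausdorffMeasure_ne_zero (d := t.toNNReal) ?_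
  rw [Real.coe_toNNReal t ht.le, MeasureTheory.Measure.hausdorffMeasure_apply]
  suffices hlow : ENNReal.ofReal (m / 2) ≤ _ from
    (lt_of_lt_of_le (ENNReal.ofReal_pos.mpr (half_pos hm)) hlow).ne'
  refine le_trans ?_ (le_iSup₂ (1 : ENNReal) one_pos)
  refine le_iInf fun s => le_iInf fun hs => le_iInf fun hs1 => ?_
  obtain ⟨ε, hε0, hε⟩ := ENNReal.exists_pos_sum_of_countable'
    (ENNReal.ofReal_pos.mpr (half_pos hm)).ne' ℕ
  have hfin : ∀ i, Metric.ediam (s i) ≠ ⊤ := fun i =>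
    ne_top_of_le_ne_top ENNReal.one_ne_top (hs1 i)
  have hη : ∀ i, ∃ η : ℝ, 0 < η ∧
      ENNReal.ofReal (((Metric.ediam (s i)).toReal + 2 * η) ^ t) ≤
        Metric.ediam (s i) ^ t + ε i := by
    intro i
    have hc : Filter.Tendsto
        (fun η : ℝ => ENNReal.ofReal (((Metric.ediam (s i)).toReal + 2 * η) ^ t))
        (nhds 0) (nhds (Metric.ediam (s i) ^ t)) := by
      have : Continuous
          (fun η : ℝ => ENNReal.ofReal (((Metric.ediam (s i)).toReal + 2 * η) ^ t)) :=
        ENNReal.continuous_ofReal.comp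
          ((Real.continuous_rpow_const ht.le).comp (by fun_prop))
      convert this.tendsto 0 using 2
      rw [mul_zero, add_zero, ← ENNReal.ofReal_rpow_of_nonneg ENNReal.toReal_nonneg ht.le,
        ENNReal.ofReal_toReal (hfin i)]
    have hlt : Metric.ediam (s i) ^ t < Metric.ediam (s i) ^ t + ε i :=
      ENNReal.lt_add_right (ENNReal.rpow_ne_top_of_nonneg ht.le (hfin i)) (hε0 i).ne'
    obtain ⟨η, h1, h2⟩ := (((hc.eventually_lt_const hlt).filter_mono
      (nhdsWithin_le_nhds (s := Ioi 0))).and self_mem_nhdsWithin).exists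
    exact ⟨η, h2, h1.le⟩
  choose η hη0 hη using hη
  obtain ⟨I, hI⟩ := hK.elim_finite_subcover (fun i => Metric.thickening (η i) (s i))
    (fun _ => Metric.isOpen_thickening)
    (hs.trans (iUnion_mono fun i => Metric.self_subset_thickening (hη0 i) _))
  have hsum := h I _ (fun i => (Metric.ediam (s i)).toReal + 2 * η i)
    (fun i => add_pos_of_nonneg_of_pos ENNReal.toReal_nonneg (by have := hη0 i; positivity))
    (by
      intro i x hx z hz
      obtain ⟨x', hx', hxx⟩ := Metric.mem_thickening_iff.mp hx
      obtain ⟨z', hz', hzz⟩ := Metric.mem_thickening_iff.mp hz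
      have h1 : dist x' z' ≤ (Metric.ediam (s i)).toReal := by
        rw [dist_edist]
        exact ENNReal.toReal_mono (hfin i) (Metric.edist_le_ediam_of_mem hx' hz')
      have h2 := dist_triangle4 x x' z' z
      rw [dist_comm z' z] at h2
      linarith) hI
  have hterm : ∀ i, Metric.ediam (s i) ^ t ≤
      ⨆ (_ : (s i).Nonempty), Metric.ediam (s i) ^ t := by
    intro i
    rcases (s i).eq_empty_or_nonempty with he | hne
    · simp [he, ht]
    · simp [hne]
  have htot : ENNReal.ofReal m ≤
      (∑' i, ⨆ (_ : (s i).Nonempty), Metric.ediam (s i) ^ t) + ENNReal.ofReal (m / 2) := by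
    calc ENNReal.ofReal m
        ≤ ENNReal.ofReal (∑ i ∈ I, ((Metric.ediam (s i)).toReal + 2 * η i) ^ t) :=
          ENNReal.ofReal_le_ofReal hsum
      _ = ∑ i ∈ I, ENNReal.ofReal (((Metric.ediam (s i)).toReal + 2 * η i) ^ t) :=
          ENNReal.ofReal_sum_of_nonneg fun i _ => Real.rpow_nonneg
            (add_nonneg ENNReal.toReal_nonneg (by have := hη0 i; positivity)) t
      _ ≤ ∑ i ∈ I, ((⨆ (_ : (s i).Nonempty), Metric.ediam (s i) ^ t) + ε i) :=
          Finset.sum_le_sum fun i _ => (hη i).trans (add_le_add_left (hterm i) _)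
      _ ≤ ∑' i, ((⨆ (_ : (s i).Nonempty), Metric.ediam (s i) ^ t) + ε i) :=
          ENNReal.sum_le_tsum I
      _ ≤ _ := by
          rw [ENNReal.tsum_add]
          exact add_le_add_right hε.le _
  have hhalf : ENNReal.ofReal m = ENNReal.ofReal (m / 2) + ENNReal.ofReal (m / 2) := by
    rw [← ENNReal.ofReal_add (by positivity) (by positivity), add_halves]
  rw [hhalf] at htot
  exact (ENNReal.add_le_add_iff_right ENNReal.ofReal_ne_top).mp htot

lemma graphDirected_le_dimH (hr : ∀ u v, E u v → 0 < r u v ∧ r u v < 1)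
    (hdist : ∀ u v, E u v → ∀ x y, dist (f u v x) (f u v y) = r u v * dist x y)
    (hC : ∀ u, (C u).Nonempty ∧ IsCompact (C u))
    (hCattr : ∀ u, C u = ⋃ (v : V) (_ : E u v), f u v '' C v)
    (hsep : ∀ u v v', E u v → E u v' → v ≠ v' → Disjoint (f u v '' C v) (f u v' '' C v'))
    {t : ℝ} (ht : 0 < t) {y : V → ℝ} (hy : ∀ u, 0 < y u)
    (hAy : ∀ u, ∑ v with E u v, r u v ^ t * y v = y u) (u : V) :
    ENNReal.ofReal t ≤ dimH (C u) := by
  obtain ⟨q, hq0, hq1, hq⟩ := exists_uniform_ratio_lt_one hr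
  have hfC : ∀ u v, E u v → IsCompact (f u v '' C v) := fun u v hv =>
    (hC v).2.image (LipschitzWith.of_dist_le_mul (K := (r u v).toNNReal) fun a b => by
      rw [hdist u v hv, Real.coe_toNNReal _ (hr u v hv).1.le]).continuous
  obtain ⟨g, hg0, hg⟩ := exists_uniform_gap hfC hsep
  obtain ⟨c, hc0, hc⟩ : ∃ c : ℝ, 0 < c ∧ ∀ u, c * y u ≤ g ^ t := by
    have h : ∀ᶠ c in nhdsWithin (0 : ℝ) (Ioi 0), ∀ u, c * y u < g ^ t := by
      refine Filter.eventually_all.mpr fun u => Filter.Eventually.filter_mono nhdsWithin_le_nhds ?_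
      have hlim : Filter.Tendsto (fun c : ℝ => c * y u) (nhds 0) (nhds (0 * y u)) :=
        (continuous_id.mul continuous_const).tendsto 0
      exact hlim.eventually_lt_const (by rw [zero_mul]; positivity)
    obtain ⟨c, h1, h2⟩ := (h.and self_mem_nhdsWithin).exists
    exact ⟨c, h2, fun u => (h1 u).le⟩
  refine (hC u).2.le_dimH_of_forall_finite_cover ht (mul_pos hc0 (hy u)) fun I U b hb hU hcov => ?_
  obtain ⟨k, hk⟩ : ∃ k : ℕ, ∀ i ∈ I, q ^ k * g < b i := by
    have hlim : Filter.Tendsto (fun k : ℕ => q ^ k * g) Filter.atTop (nhds 0) := by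
      simpa using (tendsto_pow_atTop_nhds_zero_of_lt_one hq0.le hq1).mul_const g
    exact ((Filter.eventually_all_finset I).mpr
      fun i _ => hlim.eventually_lt_const (hb i)).exists
  exact graphDirected_le_sum_of_cover hr hdist (fun u => (hC u).1) hCattr ht.le hAy hq0 hq hg0 hg hc
    k u I U b (fun i hi => (hk i hi).le) (fun i _ => hU i) hcov

end GraphDirected

/-- for a graph-directed construction with strongly connected graph, if
`t₀ ≥ 0` is such that the spectral radius of the weighted incidence matrix `A^{t₀}`
equals `1`, then the Hausdorff dimension of `K* = ⋃_u C_u` equals `t₀`. -/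
theorem stmt11 (n : ℕ) (hn : 1 ≤ n)
    (E : Fin n → Fin n → Prop) (hE : ∀ u, ∃ v, E u v)
    (r a : Fin n → Fin n → ℝ)
    (hr : ∀ u v, E u v → 0 < r u v ∧ r u v < 1)
    (f : Fin n → Fin n → ℝ → ℝ) (hf : ∀ u v x, f u v x = r u v * x + a u v)
    -- the pairwise disjoint nonempty bounded closed intervals `J_u`
    (c d : Fin n → ℝ) (hJne : ∀ u, c u ≤ d u)
    (hJdisj : ∀ u v, u ≠ v → Disjoint (Icc (c u) (d u)) (Icc (c v) (d v)))
    (hinv : ∀ u, (⋃ (v : Fin n) (_ : E u v), f u v '' Icc (c v) (d v)) ⊆ Icc (c u) (d u))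
    (hsep : ∀ u v v', E u v → E u v' → v ≠ v' →
      Disjoint (f u v '' Icc (c v) (d v)) (f u v' '' Icc (c v') (d v')))
    -- the attractor `(C_1,…,C_n)`
    (C : Fin n → Set ℝ)
    (hC : ∀ u, (C u).Nonempty ∧ IsCompact (C u))
    (hCattr : ∀ u, C u = ⋃ (v : Fin n) (_ : E u v), f u v '' C v)
    -- the graph is strongly connected
    (hconn : ∀ u v : Fin n, Relation.ReflTransGen E u v)
    -- `t₀ ≥ 0` with spectral radius of `A^{t₀}` equal to `1`
    (t₀ : ℝ) (ht₀ : 0 ≤ t₀)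
    (hspec : spectralRadius ℂ
      (Matrix.of fun u v : Fin n => if E u v then ((r u v ^ t₀ : ℝ) : ℂ) else 0) = 1) :
    dimH (⋃ u, C u) = ENNReal.ofReal t₀ := by
  have : Nonempty (Fin n) := ⟨⟨0, hn⟩⟩
  have hdist : ∀ u v, E u v → ∀ x y, dist (f u v x) (f u v y) = r u v * dist x y := by
    intro u v hv x y
    rw [hf, hf, Real.dist_eq, Real.dist_eq, add_sub_add_right_eq_sub, ← mul_sub, abs_mul,
      abs_of_pos (hr u v hv).1]
  have hCJ : ∀ u, C u ⊆ Icc (c u) (d u) :=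
    graphDirected_attractor_subset hr hdist hC hCattr
      (fun u => ⟨nonempty_Icc.mpr (hJne u), isCompact_Icc⟩)
      fun u v hv => (subset_iUnion₂ (s := fun v (_ : E u v) => f u v '' Icc (c v) (d v)) v hv).trans
        (hinv u)
  have hpos : ∀ u v, E u v → 0 < r u v ^ t₀ := fun u v h => Real.rpow_pos_of_pos (hr u v h).1 _
  obtain ⟨y, hy, hAy⟩ := Matrix.exists_pos_mulVec_eq_self
    (A := Matrix.of fun u v : Fin n => if E u v then r u v ^ t₀ else 0)
    (fun u v => by
      rw [Matrix.of_apply]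
      split_ifs with h
      exacts [(hpos u v h).le, le_rfl])
    (fun u v => Relation.ReflTransGen.mono (fun a b h => by simpa [h] using hpos a b h) u v
      (hconn u v))
    (by
      rw [← hspec]
      congr 1
      ext u v
      simp only [Matrix.map_apply, Matrix.of_apply]
      split_ifs <;> simp)
  have hAy : ∀ u, ∑ v with E u v, r u v ^ t₀ * y v = y u := fun u => by
    conv_rhs => rw [← hAy]
    simp [Matrix.mulVec, dotProduct, Finset.sum_filter, ite_mul]
  refine le_antisymm ?_ ?_
  · rw [dimH_iUnion]
    exact iSup_le (graphDirected_dimH_le hr hdist (fun u => (hC u).2) hCattr ht₀ hy hAy)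
  · rcases ht₀.eq_or_lt with h0 | hpos
    · simp [← h0]
    · exact (graphDirected_le_dimH hr hdist hC hCattr
        (fun u v v' h h' hne => (hsep u v v' h h' hne).mono (image_mono (hCJ v))
          (image_mono (hCJ v'))) hpos hy hAy ⟨0, hn⟩).trans
        (dimH_mono (subset_iUnion C _))
end

section
/- Consider a graph-directed construction (with graph G not necessarily strongly connected). Call a nonempty subset S ⊆ V strongly connected if for all u, v ∈ S there is a directed path from u to v using only vertices of S. Then the Hausdorff dimension of K* = ⋃_{u=1}^n C_u equals the supremum of the set {t ≥ 0 : there exists a strongly connected S ⊆ V such that the spectral radius of the submatrix of A^t indexed by S × S equals 1}. -/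
open Set
open scoped Classical

open Filter Topology MeasureTheory
open scoped NNReal ENNReal Matrix

section NonnegMatrix

variable {ι : Type*} [Fintype ι]

/-- A nonnegative nonzero vector `x` with `x ≤ B x`. -/
def HasSubinvariantVector (B : Matrix ι ι ℝ) : Prop :=
  ∃ x : ι → ℝ, 0 ≤ x ∧ x ≠ 0 ∧ x ≤ B *ᵥ x

variable [DecidableEq ι] {B : Matrix ι ι ℝ}

theorem exists_smul_le_mulVec_of_mem_spectrum (hB : ∀ i j, 0 ≤ B i j) {z : ℂ}
    (hz : z ∈ spectrum ℂ (B.map (fun a : ℝ => (a : ℂ)))) :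
    ∃ x : ι → ℝ, 0 ≤ x ∧ x ≠ 0 ∧ ‖z‖ • x ≤ B *ᵥ x := by
  rw [← Matrix.spectrum_toLin', ← Module.End.hasEigenvalue_iff_mem_spectrum] at hz
  obtain ⟨w, hw⟩ := hz.exists_hasEigenvector
  have hw1 := hw.apply_eq_smul
  refine ⟨fun i => ‖w i‖, fun i => norm_nonneg _, fun h => hw.2 ?_, fun i => ?_⟩
  · ext i
    simpa using congrFun h i
  · have h := congrFun hw1 i
    rw [Matrix.toLin'_apply] at h
    simp only [Matrix.mulVec, dotProduct, Matrix.map_apply, Pi.smul_apply, smul_eq_mul] at h ⊢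
    rw [← norm_mul, ← h]
    refine (norm_sum_le _ _).trans (Finset.sum_le_sum fun j _ => ?_)
    rw [norm_mul, Complex.norm_real, Real.norm_of_nonneg (hB i j)]

attribute [local instance] Matrix.linftyOpNormedRing Matrix.linftyOpNormedAlgebra

theorem exists_spectralRadius_smul_le_mulVec (hB : ∀ i j, 0 ≤ B i j)
    (h : spectralRadius ℂ (B.map (fun a : ℝ => (a : ℂ))) ≠ 0) :
    ∃ (c : ℝ) (x : ι → ℝ), spectralRadius ℂ (B.map (fun a : ℝ => (a : ℂ))) = ENNReal.ofReal c ∧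
      0 ≤ x ∧ x ≠ 0 ∧ c • x ≤ B *ᵥ x := by
  have hne : (spectrum ℂ (B.map (fun a : ℝ => (a : ℂ)))).Nonempty := by
    by_contra hne
    rw [Set.not_nonempty_iff_eq_empty] at hne
    exact h (by simp [spectralRadius, hne])
  obtain ⟨z, hz, hzr⟩ := spectrum.exists_nnnorm_eq_spectralRadius_of_nonempty hne
  obtain ⟨x, hx⟩ := exists_smul_le_mulVec_of_mem_spectrum hB hz
  exact ⟨‖z‖, x, by rw [← hzr, ofReal_norm]; rfl, hx⟩

theorem tendsto_pow_mulVec_of_spectralRadius_lt_one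
    (h : spectralRadius ℂ (B.map (fun a : ℝ => (a : ℂ))) < 1) (y : ι → ℝ) (i : ι) :
    Tendsto (fun k : ℕ => (B ^ k *ᵥ y) i) atTop (𝓝 0) := by
  set M := B.map (fun a : ℝ => (a : ℂ)) with hM
  have hpow : Tendsto (fun k : ℕ => M ^ k) atTop (𝓝 0) := by
    obtain ⟨q, hq, hq1⟩ := ENNReal.lt_iff_exists_nnreal_btwn.1 h
    have hq1' : q < 1 := by exact_mod_cast hq1
    have hev := (spectrum.pow_nnnorm_pow_one_div_tendsto_nhds_spectralRadius M).eventually_lt_const hq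
    refine tendsto_zero_iff_norm_tendsto_zero.2 ?_
    refine squeeze_zero' (Eventually.of_forall fun _ => norm_nonneg _) ?_
      (tendsto_pow_atTop_nhds_zero_of_lt_one q.2 (by exact_mod_cast hq1'))
    filter_upwards [hev, eventually_gt_atTop 0] with k hk hk0
    have h1 : ((‖M ^ k‖₊ : ℝ≥0∞) ^ (1 / (k : ℝ))) ^ (k : ℝ) ≤ (q : ℝ≥0∞) ^ (k : ℝ) :=
      ENNReal.rpow_le_rpow hk.le (by positivity)
    rw [← ENNReal.rpow_mul, one_div_mul_cancel (by positivity), ENNReal.rpow_one,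
      ENNReal.rpow_natCast] at h1
    exact_mod_cast h1
  have hentry : ∀ i j, Tendsto (fun k : ℕ => (B ^ k) i j) atTop (𝓝 0) := by
    intro i j
    have h1 : Tendsto (fun k : ℕ => (M ^ k) i j) atTop (𝓝 0) := by
      have := ((continuous_id.matrix_elem i j).tendsto (0 : Matrix ι ι ℂ)).comp hpow
      simpa [Function.comp_def] using this
    have h2 : ∀ k, (M ^ k) i j = (((B ^ k) i j : ℝ) : ℂ) := by
      intro k
      have : M ^ k = (B ^ k).map (Complex.ofRealHom) := by
        rw [Matrix.map_pow]; rfl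
      rw [this]; rfl
    simp_rw [h2] at h1
    simpa [Function.comp_def] using (Complex.continuous_re.tendsto 0).comp h1
  simp only [Matrix.mulVec, dotProduct]
  simpa using tendsto_finsetSum Finset.univ fun j _ => (hentry i j).mul_const (y j)

theorem one_le_spectralRadius_of_hasSubinvariantVector (hB : ∀ i j, 0 ≤ B i j)
    (h : HasSubinvariantVector B) : 1 ≤ spectralRadius ℂ (B.map (fun a : ℝ => (a : ℂ))) := by
  obtain ⟨x, hx0, hxne, hx⟩ := h
  by_contra! hlt
  have hle : ∀ k : ℕ, x ≤ B ^ k *ᵥ x := by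
    intro k
    induction k with
    | zero => simp
    | succ k ih =>
      refine hx.trans fun i => ?_
      rw [pow_succ', ← Matrix.mulVec_mulVec]
      exact Finset.sum_le_sum fun j _ => mul_le_mul_of_nonneg_left (ih j) (hB i j)
  refine hxne (le_antisymm (fun i => ?_) hx0)
  exact ge_of_tendsto' (tendsto_pow_mulVec_of_spectralRadius_lt_one hlt x i) fun k => hle k i

end NonnegMatrix

section GraphDirected

universe w

variable {ι : Type w}

/-- The matrix with entries `r i j ^ t` on the edges of `E` and `0` elsewhere. -/
noncomputable def weightMatrix (E : ι → ι → Prop) (r : ι → ι → ℝ) (t : ℝ) : Matrix ι ι ℝ :=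
  Matrix.of fun i j => if E i j then r i j ^ t else 0

/-- `C` solves the graph-directed equations `C u = ⋃_{E u v} (r u v * C v + a u v)`. -/
def IsGraphAttractor (E : ι → ι → Prop) (r a : ι → ι → ℝ) (C : ι → Set ℝ) : Prop :=
  ∀ u y, y ∈ C u ↔ ∃ v, E u v ∧ ∃ z ∈ C v, r u v * z + a u v = y

variable {E : ι → ι → Prop} {r a : ι → ι → ℝ} {C : ι → Set ℝ}

theorem weightMatrix_nonneg (hr : ∀ u v, E u v → 0 < r u v) (t : ℝ) (i j : ι) :
    0 ≤ weightMatrix E r t i j := by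
  simp only [weightMatrix, Matrix.of_apply]
  split_ifs with h
  · exact (Real.rpow_pos_of_pos (hr i j h) t).le
  · exact le_rfl

theorem exists_pos_forall_le_of_finite {α : Type*} [Finite α] (g : α → ℝ) (hg : ∀ i, 0 < g i) :
    ∃ δ > 0, ∀ i, δ ≤ g i := by
  cases isEmpty_or_nonempty α
  · exact ⟨1, one_pos, fun i => isEmptyElim i⟩
  · obtain ⟨i, hi⟩ := Finite.exists_min g
    exact ⟨g i, hg i, hi⟩

theorem exists_pos_forall_ge_of_finite {α : Type*} [Finite α] (g : α → ℝ) :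
    ∃ M > 0, ∀ i, g i ≤ M := by
  obtain ⟨M, hM⟩ := (Set.finite_range g).bddAbove
  exact ⟨max M 1, by positivity, fun i => (hM ⟨i, rfl⟩).trans (le_max_left _ _)⟩

theorem exists_uniform_ratio [Finite ι] (hr : ∀ u v, E u v → 0 < r u v ∧ r u v < 1) :
    ∃ ρ : ℝ, 0 < ρ ∧ ρ < 1 ∧ ∀ u v, E u v → r u v ≤ ρ := by
  obtain ⟨δ, hδ, h⟩ := exists_pos_forall_le_of_finite
    (fun p : ι × ι => if E p.1 p.2 then 1 - r p.1 p.2 else 1) (by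
      intro p
      split_ifs with hp
      · linarith [(hr _ _ hp).2]
      · exact one_pos)
  refine ⟨max (1 - δ) (1 / 2), by positivity, max_lt (by linarith) (by norm_num), fun u v huv => ?_⟩
  have := h (u, v)
  simp only [huv, if_true] at this
  exact le_max_of_le_left (by linarith)

theorem exists_uniform_diam [Finite ι] (hC : ∀ u, IsCompact (C u)) :
    ∃ D > 0, ∀ u, ∀ y ∈ C u, ∀ z ∈ C u, |y - z| ≤ D := by
  obtain ⟨D, hD, h⟩ := exists_pos_forall_ge_of_finite fun u => Metric.diam (C u)
  exact ⟨D, hD, fun u y hy z hz =>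
    (Metric.dist_le_diam_of_mem (hC u).isBounded hy hz).trans (h u)⟩

/-- The attractor lies in any system of intervals that is mapped into itself. -/
theorem IsGraphAttractor.subset_Icc [Finite ι] (hA : IsGraphAttractor E r a C)
    (hr : ∀ u v, E u v → 0 < r u v ∧ r u v < 1) (hC : ∀ u, IsCompact (C u))
    {c d : ι → ℝ} (hcd : ∀ u, c u ≤ d u)
    (hinv : ∀ u v, E u v → ∀ x ∈ Icc (c v) (d v), r u v * x + a u v ∈ Icc (c u) (d u)) (u : ι) :
    C u ⊆ Icc (c u) (d u) := by
  obtain ⟨ρ, hρ0, hρ1, hρ⟩ := exists_uniform_ratio hr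
  choose M hM using fun u => (hC u).isBounded.subset_closedBall (c u)
  obtain ⟨R, hR, hMR⟩ := exists_pos_forall_ge_of_finite M
  have key : ∀ k : ℕ, ∀ u, ∀ y ∈ C u, c u - ρ ^ k * R ≤ y ∧ y ≤ d u + ρ ^ k * R := by
    intro k
    induction k with
    | zero =>
      intro u y hy
      have h := (Metric.mem_closedBall.1 (hM u hy)).trans (hMR u)
      rw [Real.dist_eq, abs_le] at h
      constructor <;> linarith [hcd u]
    | succ k ih =>
      intro u y hy
      obtain ⟨v, huv, z, hz, rfl⟩ := (hA u y).1 hy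
      obtain ⟨h1, h2⟩ := ih v z hz
      have hc := (hinv u v huv (c v) ⟨le_rfl, hcd v⟩).1
      have hd := (hinv u v huv (d v) ⟨hcd v, le_rfl⟩).2
      have hr0 := (hr u v huv).1
      have he : 0 ≤ ρ ^ k * R := by positivity
      have h3 := mul_le_mul_of_nonneg_left h1 hr0.le
      have h4 := mul_le_mul_of_nonneg_left h2 hr0.le
      have h5 := mul_le_mul_of_nonneg_right (hρ u v huv) he
      rw [pow_succ']
      constructor <;> nlinarith
  intro y hy
  have hlim : Tendsto (fun k : ℕ => ρ ^ k * R) atTop (𝓝 0) := by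
    simpa using (tendsto_pow_atTop_nhds_zero_of_lt_one hρ0.le hρ1).mul_const R
  refine ⟨ge_of_tendsto' (f := fun k : ℕ => y + ρ ^ k * R) (x := atTop) ?_ fun k => ?_,
    ge_of_tendsto' (f := fun k : ℕ => d u + ρ ^ k * R) (x := atTop) ?_ fun k => (key k u y hy).2⟩
  · simpa using hlim.const_add y
  · linarith [(key k u y hy).1]
  · simpa using hlim.const_add (d u)

/-- The natural covers of the attractor by cylinders of level `k`. -/
theorem IsGraphAttractor.exists_cover [Fintype ι] [DecidableEq ι] (hA : IsGraphAttractor E r a C)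
    (hr : ∀ u v, E u v → 0 < r u v ∧ r u v < 1) {t D ρ : ℝ} (ht : 0 < t) (hD : 0 ≤ D)
    (hCD : ∀ u, ∀ y ∈ C u, ∀ z ∈ C u, |y - z| ≤ D) (hρ : ∀ u v, E u v → r u v ≤ ρ) (hρ0 : 0 ≤ ρ)
    (k : ℕ) : ∀ u, ∃ (β : Type w) (_ : Fintype β) (s : β → Set ℝ) (b : β → ℝ),
      (∀ i, 0 ≤ b i ∧ b i ≤ ρ ^ k * D ∧ ∀ y ∈ s i, ∀ z ∈ s i, |y - z| ≤ b i) ∧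
      C u ⊆ ⋃ i, s i ∧ ∑ i, b i ^ t = (weightMatrix E r t ^ k *ᵥ fun _ => D ^ t) u := by
  induction k with
  | zero =>
    intro u
    refine ⟨PUnit, inferInstance, fun _ => C u, fun _ => D, fun _ => ⟨hD, by simp, hCD u⟩,
      fun y hy => mem_iUnion.2 ⟨⟨⟩, hy⟩, by simp⟩
  | succ k ih =>
    intro u
    choose β hβ s b hb hs hsum using ih
    refine ⟨Σ v, β v, inferInstance,
      fun i => if E u i.1 then (fun x => r u i.1 * x + a u i.1) '' s i.1 i.2 else ∅,
      fun i => if E u i.1 then r u i.1 * b i.1 i.2 else 0, ?_, ?_, ?_⟩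
    · rintro ⟨v, i⟩
      obtain ⟨h0, h1, h2⟩ := hb v i
      by_cases huv : E u v
      · have hr0 := (hr u v huv).1.le
        simp only [huv, if_true]
        refine ⟨by positivity, ?_, ?_⟩
        · rw [pow_succ', mul_assoc]
          exact mul_le_mul (hρ u v huv) h1 h0 hρ0
        · rintro _ ⟨y, hy, rfl⟩ _ ⟨z, hz, rfl⟩
          rw [show r u v * y + a u v - (r u v * z + a u v) = r u v * (y - z) by ring, abs_mul,
            abs_of_nonneg hr0]
          exact mul_le_mul_of_nonneg_left (h2 y hy z hz) hr0
      · simp only [huv, if_false]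
        exact ⟨le_rfl, by positivity, by simp⟩
    · intro y hy
      obtain ⟨v, huv, z, hz, rfl⟩ := (hA u y).1 hy
      obtain ⟨i, hi⟩ := mem_iUnion.1 (hs v hz)
      refine mem_iUnion.2 ⟨⟨v, i⟩, ?_⟩
      simp only [huv, if_true]
      exact ⟨z, hi, rfl⟩
    · rw [pow_succ', ← Matrix.mulVec_mulVec, Fintype.sum_sigma, Matrix.mulVec, dotProduct]
      refine Finset.sum_congr rfl fun v _ => ?_
      rw [← hsum v, Finset.mul_sum]
      refine Finset.sum_congr rfl fun i _ => ?_
      by_cases huv : E u v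
      · simp [weightMatrix, huv, Real.mul_rpow (hr u v huv).1.le (hb v i).1]
      · simp [weightMatrix, huv, Real.zero_rpow ht.ne']

theorem IsGraphAttractor.dimH_le [Fintype ι] [DecidableEq ι] (hA : IsGraphAttractor E r a C)
    (hr : ∀ u v, E u v → 0 < r u v ∧ r u v < 1) (hC : ∀ u, IsCompact (C u)) {t : ℝ≥0} (ht : 0 < t)
    (hlim : ∀ y u, Tendsto (fun k : ℕ => (weightMatrix E r t ^ k *ᵥ y) u) atTop (𝓝 0)) (u : ι) :
    dimH (C u) ≤ t := by
  obtain ⟨ρ, hρ0, hρ1, hρ⟩ := exists_uniform_ratio hr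
  obtain ⟨D, hD, hCD⟩ := exists_uniform_diam hC
  choose β hβ s b hb hs hsum using fun k =>
    hA.exists_cover hr (NNReal.coe_pos.2 ht) hD.le hCD hρ hρ0.le k u
  have hdiam : ∀ k i, Metric.ediam (s k i) ≤ ENNReal.ofReal (b k i) := fun k i =>
    Metric.ediam_le fun y hy z hz => by
      rw [edist_dist]
      exact ENNReal.ofReal_le_ofReal ((hb k i).2.2 y hy z hz)
  have hzero : Tendsto (fun k : ℕ => ENNReal.ofReal (ρ ^ k * D)) atTop (𝓝 0) := by
    simpa using ENNReal.tendsto_ofReal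
      ((tendsto_pow_atTop_nhds_zero_of_lt_one hρ0.le hρ1).mul_const D)
  have hle := Measure.hausdorffMeasure_le_liminf_sum (t : ℝ) (C u) _ hzero s
    (Eventually.of_forall fun k i =>
      (hdiam k i).trans (ENNReal.ofReal_le_ofReal (hb k i).2.1)) (Eventually.of_forall hs)
  have hsumle : ∀ k, ∑ i, Metric.ediam (s k i) ^ (t : ℝ) ≤
      ENNReal.ofReal ((weightMatrix E r t ^ k *ᵥ fun _ => D ^ (t : ℝ)) u) := by
    intro k
    rw [← hsum k, ENNReal.ofReal_sum_of_nonneg fun i _ => Real.rpow_nonneg (hb k i).1 _]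
    refine Finset.sum_le_sum fun i _ => ?_
    rw [← ENNReal.ofReal_rpow_of_nonneg (hb k i).1 t.coe_nonneg]
    exact ENNReal.rpow_le_rpow (hdiam k i) t.coe_nonneg
  have hlim0 : Tendsto (fun k : ℕ => ENNReal.ofReal
      ((weightMatrix E r t ^ k *ᵥ fun _ => D ^ (t : ℝ)) u)) atTop (𝓝 0) := by
    simpa using ENNReal.tendsto_ofReal (hlim (fun _ => D ^ (t : ℝ)) u)
  have hmeas : μH[(t : ℝ)] (C u) ≤ 0 :=
    hle.trans ((liminf_le_liminf (Eventually.of_forall hsumle)).trans hlim0.liminf_eq.le)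
  refine dimH_le_of_hausdorffMeasure_ne_top ?_
  rw [le_antisymm hmeas zero_le]
  exact ENNReal.zero_ne_top

theorem exists_uniform_gap_s12 [Finite ι] (hC : ∀ u, IsCompact (C u))
    (hsep : ∀ u v v', E u v → E u v' → v ≠ v' →
      ∀ y ∈ C v, ∀ y' ∈ C v', r u v * y + a u v ≠ r u v' * y' + a u v') :
    ∃ δ > 0, ∀ u v v', E u v → E u v' → v ≠ v' → ∀ y ∈ C v, ∀ y' ∈ C v',
      δ ≤ |r u v * y + a u v - (r u v' * y' + a u v')| := by
  have h : ∀ p : ι × ι × ι, ∃ δ > 0, E p.1 p.2.1 → E p.1 p.2.2 → p.2.1 ≠ p.2.2 →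
      ∀ y ∈ C p.2.1, ∀ y' ∈ C p.2.2,
        δ ≤ |r p.1 p.2.1 * y + a p.1 p.2.1 - (r p.1 p.2.2 * y' + a p.1 p.2.2)| := by
    rintro ⟨u, v, v'⟩
    by_cases hE : E u v ∧ E u v' ∧ v ≠ v'
    · have hK : ∀ w, IsCompact ((fun y => r u w * y + a u w) '' C w) := fun w =>
        (hC w).image (by fun_prop)
      have hdisj : Disjoint ((fun y => r u v * y + a u v) '' C v)
          ((fun y => r u v' * y + a u v') '' C v') := by
        rw [Set.disjoint_left]
        rintro _ ⟨y, hy, rfl⟩ ⟨y', hy', h⟩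
        exact hsep u v v' hE.1 hE.2.1 hE.2.2 y hy y' hy' h.symm
      obtain ⟨δ, hδ, h⟩ := Metric.exists_pos_forall_lt_edist (hK v) (hK v').isClosed hdisj
      refine ⟨δ, hδ, fun _ _ _ y hy y' hy' => ?_⟩
      have h1 := h _ ⟨y, hy, rfl⟩ _ ⟨y', hy', rfl⟩
      rw [edist_nndist, ENNReal.coe_lt_coe] at h1
      exact (NNReal.coe_lt_coe.2 h1).le
    · exact ⟨1, one_pos, fun h1 h2 h3 => absurd ⟨h1, h2, h3⟩ hE⟩
  choose g hg hgap using h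
  obtain ⟨δ, hδ, hle⟩ := exists_pos_forall_le_of_finite g hg
  exact ⟨δ, hδ, fun u v v' h1 h2 h3 y hy y' hy' =>
    (hle (u, v, v')).trans (hgap (u, v, v') h1 h2 h3 y hy y' hy')⟩

/-- Points of the attractor coded by the orbits of a self-map that follows the edges of the
graph. -/
theorem IsGraphAttractor.exists_coding [Finite ι] (hA : IsGraphAttractor E r a C)
    (hr : ∀ u v, E u v → 0 < r u v ∧ r u v < 1) (hC : ∀ u, (C u).Nonempty ∧ IsCompact (C u))
    {Ω : Type*} (label : Ω → ι) (next : Ω → Ω) (hnext : ∀ p, E (label p) (label (next p))) :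
    ∃ h : Ω → ℝ, ∀ p, h p ∈ C (label p) ∧
      h p = r (label p) (label (next p)) * h (next p) + a (label p) (label (next p)) := by
  obtain ⟨ρ, hρ0, hρ1, hρ⟩ := exists_uniform_ratio hr
  obtain ⟨D, hD, hCD⟩ := exists_uniform_diam fun u => (hC u).2
  choose pt hpt using fun u => (hC u).1
  let H : ℕ → Ω → ℝ := fun k => Nat.rec (fun p => pt (label p)) (fun _ g p =>
    r (label p) (label (next p)) * g (next p) + a (label p) (label (next p))) k
  have Hsucc : ∀ k p, H (k + 1) p =
      r (label p) (label (next p)) * H k (next p) + a (label p) (label (next p)) := fun _ _ => rfl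
  have Hmem : ∀ k p, H k p ∈ C (label p) := by
    intro k
    induction k with
    | zero => exact fun p => hpt _
    | succ k ih => exact fun p => (hA _ _).2 ⟨_, hnext p, _, ih (next p), rfl⟩
  have Hdist : ∀ k p, dist (H k p) (H (k + 1) p) ≤ D * ρ ^ k := by
    intro k
    induction k with
    | zero => exact fun p => by simpa [Real.dist_eq] using hCD _ _ (Hmem 0 p) _ (Hmem 1 p)
    | succ k ih =>
      intro p
      have hr0 := (hr _ _ (hnext p)).1.le
      rw [Hsucc (k + 1), Hsucc k, dist_add_right, Real.dist_eq, ← mul_sub, abs_mul,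
        abs_of_nonneg hr0, ← Real.dist_eq, pow_succ', mul_left_comm]
      exact mul_le_mul (hρ _ _ (hnext p)) (ih _) dist_nonneg hρ0.le
  choose h hh using fun p =>
    cauchySeq_tendsto_of_complete (cauchySeq_of_le_geometric ρ D hρ1 fun k => Hdist k p)
  refine ⟨h, fun p => ⟨(hC _).2.isClosed.mem_of_tendsto (hh p)
    (Eventually.of_forall fun k => Hmem k p), ?_⟩⟩
  exact tendsto_nhds_unique ((tendsto_add_atTop_iff_nat 1).2 (hh p))
    (((hh (next p)).const_mul _).add_const _)

/-- An interval of length `∑ i ∈ s, w i` is covered by translates of the intervals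
`[0, w i)`. -/
theorem exists_offset_of_lt_sum {α : Type*} (s : Finset α) (w : α → ℝ) :
    ∃ off : α → ℝ, ∀ z, 0 ≤ z → z < ∑ i ∈ s, w i → ∃ i ∈ s, off i ≤ z ∧ z < off i + w i := by
  induction s using Finset.induction_on with
  | empty => exact ⟨0, fun z h0 h1 => absurd h1 (by simpa using h0)⟩
  | insert i s hi ih =>
    obtain ⟨off, hoff⟩ := ih
    refine ⟨Function.update off i (∑ j ∈ s, w j), fun z h0 h1 => ?_⟩
    rw [Finset.sum_insert hi, add_comm] at h1
    rcases lt_or_ge z (∑ j ∈ s, w j) with hz | hz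
    · obtain ⟨j, hj, h⟩ := hoff z h0 hz
      have hji : j ≠ i := fun h => hi (h ▸ hj)
      exact ⟨j, Finset.mem_insert_of_mem hj, by simpa [Function.update_of_ne hji] using h⟩
    · exact ⟨i, Finset.mem_insert_self _ _, by simpa using ⟨hz, h1⟩⟩

theorem le_dimH_of_dist_le_mul_rpow {g : ℝ → ℝ} {s : Set ℝ} {l K : ℝ} {t : ℝ≥0} (hl : 0 < l)
    (hK : 0 ≤ K) (ht : 0 < t) (hg : ∀ z ∈ Ico 0 l, g z ∈ s)
    (h : ∀ z ∈ Ico 0 l, ∀ z' ∈ Ico 0 l, |z - z'| ≤ K * |g z - g z'| ^ (t : ℝ)) :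
    (t : ℝ≥0∞) ≤ dimH s := by
  have hinj : InjOn g (Ico 0 l) := by
    intro z hz z' hz' hzz
    have := h z hz z' hz'
    rw [hzz, sub_self, abs_zero, Real.zero_rpow (NNReal.coe_pos.2 ht).ne', mul_zero] at this
    exact sub_eq_zero.1 (abs_nonpos_iff.1 this)
  have hholder : HolderOnWith K.toNNReal t (Function.invFunOn g (Ico 0 l)) (g '' Ico 0 l) := by
    rintro _ ⟨z, hz, rfl⟩ _ ⟨z', hz', rfl⟩
    rw [hinj.leftInvOn_invFunOn hz, hinj.leftInvOn_invFunOn hz', edist_dist, edist_dist,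
      ENNReal.ofReal_rpow_of_nonneg dist_nonneg t.coe_nonneg,
      ← ENNReal.ofReal, ← ENNReal.ofReal_mul hK]
    exact ENNReal.ofReal_le_ofReal (h z hz z' hz')
  have h1 := hholder.dimH_image_le ht
  rw [hinj.leftInvOn_invFunOn.image_image, Real.dimH_of_nonempty_interior (by simpa using hl),
    Module.finrank_self, Nat.cast_one, ENNReal.le_div_iff_mul_le (by simp [ht.ne']) (by simp),
    one_mul] at h1
  exact h1.trans (dimH_mono (image_subset_iff.2 hg))

theorem IsGraphAttractor.le_dimH [Fintype ι] (hA : IsGraphAttractor E r a C)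
    (hr : ∀ u v, E u v → 0 < r u v ∧ r u v < 1) (hC : ∀ u, (C u).Nonempty ∧ IsCompact (C u))
    (hsep : ∀ u v v', E u v → E u v' → v ≠ v' →
      ∀ y ∈ C v, ∀ y' ∈ C v', r u v * y + a u v ≠ r u v' * y' + a u v')
    {t : ℝ≥0} (ht : 0 < t) {x : ι → ℝ} (hx : x ≤ weightMatrix E r t *ᵥ x)
    {u : ι} (hu : 0 < x u) : (t : ℝ≥0∞) ≤ dimH (C u) := by
  obtain ⟨ρ, hρ0, hρ1, hρ⟩ := exists_uniform_ratio hr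
  obtain ⟨δ, hδ, hgap⟩ := exists_uniform_gap_s12 (fun u => (hC u).2) hsep
  obtain ⟨B, hB, hxB⟩ := exists_pos_forall_ge_of_finite x
  choose off hoff using fun u =>
    exists_offset_of_lt_sum Finset.univ fun v => weightMatrix E r t u v * x v
  have hstep : ∀ p : {p : ι × ℝ // p.2 ∈ Ico 0 (x p.1)}, ∃ q : {p : ι × ℝ // p.2 ∈ Ico 0 (x p.1)},
      E p.1.1 q.1.1 ∧ p.1.2 = off p.1.1 q.1.1 + r p.1.1 q.1.1 ^ (t : ℝ) * q.1.2 := by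
    rintro ⟨⟨u, z⟩, hz0, hz1⟩
    obtain ⟨v, -, h1, h2⟩ := hoff u z hz0 (hz1.trans_le (hx u))
    by_cases huv : E u v
    · simp only [weightMatrix, Matrix.of_apply, huv, if_true] at h2
      have hrt : 0 < r u v ^ (t : ℝ) := Real.rpow_pos_of_pos (hr u v huv).1 _
      refine ⟨⟨(v, (z - off u v) / r u v ^ (t : ℝ)), div_nonneg (sub_nonneg.2 h1) hrt.le, ?_⟩,
        huv, ?_⟩
      · rw [div_lt_iff₀ hrt]
        linarith
      · simp only
        field_simp
        ring
    · simp only [weightMatrix, Matrix.of_apply, huv, if_false] at h2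
      linarith
  choose next hE hnext using hstep
  obtain ⟨h, hh⟩ := hA.exists_coding hr hC (fun p => p.1.1) next hE
  set K := B / δ ^ (t : ℝ) with hKdef
  have hK : 0 ≤ K := by positivity
  have hρt : 0 ≤ ρ ^ (t : ℝ) := by positivity
  have key : ∀ k : ℕ, ∀ p q : {p : ι × ℝ // p.2 ∈ Ico 0 (x p.1)}, p.1.1 = q.1.1 →
      |p.1.2 - q.1.2| ≤ K * |h p - h q| ^ (t : ℝ) + (ρ ^ (t : ℝ)) ^ k * B := by
    have htriv : ∀ p q : {p : ι × ℝ // p.2 ∈ Ico 0 (x p.1)}, |p.1.2 - q.1.2| ≤ B := by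
      intro p q
      rw [abs_le]
      constructor <;> linarith [p.2.1, p.2.2, q.2.1, q.2.2, hxB p.1.1, hxB q.1.1]
    intro k
    induction k with
    | zero =>
      intro p q _
      have : 0 ≤ K * |h p - h q| ^ (t : ℝ) := by positivity
      linarith [htriv p q]
    | succ k ih =>
      intro p q hpq
      have hErr : 0 ≤ (ρ ^ (t : ℝ)) ^ k * B := by positivity
      by_cases hv : (next p).1.1 = (next q).1.1
      · have hp := hnext p
        have hq := hnext q
        have hhp := (hh p).2
        have hhq := (hh q).2
        rw [← hv, ← hpq] at hq hhq
        have hedge := hE p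
        set s := r p.1.1 (next p).1.1 with hs
        have hs0 : 0 < s := (hr _ _ hedge).1
        have hst : s ^ (t : ℝ) ≤ ρ ^ (t : ℝ) :=
          Real.rpow_le_rpow hs0.le (hρ _ _ hedge) t.coe_nonneg
        have e1 : p.1.2 - q.1.2 = s ^ (t : ℝ) * ((next p).1.2 - (next q).1.2) := by
          rw [hp, hq]; ring
        have e2 : h p - h q = s * (h (next p) - h (next q)) := by
          rw [hhp, hhq]; ring
        rw [e1, e2, abs_mul, abs_mul, abs_of_pos hs0, abs_of_pos (Real.rpow_pos_of_pos hs0 _),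
          Real.mul_rpow hs0.le (abs_nonneg _), pow_succ']
        have := mul_le_mul_of_nonneg_left (ih _ _ hv) (Real.rpow_pos_of_pos hs0 (t : ℝ)).le
        have := mul_le_mul_of_nonneg_right hst hErr
        nlinarith
      · have hq := hE q
        have hhq := (hh q).2
        rw [← hpq] at hq hhq
        have h1 := hgap _ _ _ (hE p) hq hv _ (hh (next p)).1 _ (hh (next q)).1
        rw [← (hh p).2, ← hhq] at h1
        have h2 : K * δ ^ (t : ℝ) ≤ K * |h p - h q| ^ (t : ℝ) :=
          mul_le_mul_of_nonneg_left (Real.rpow_le_rpow hδ.le h1 t.coe_nonneg) hK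
        have h3 : K * δ ^ (t : ℝ) = B := by
          rw [hKdef, div_mul_cancel₀ _ (Real.rpow_pos_of_pos hδ _).ne']
        have : 0 ≤ (ρ ^ (t : ℝ)) ^ (k + 1) * B := by positivity
        linarith [htriv p q]
  have hlim : Tendsto (fun k : ℕ => (ρ ^ (t : ℝ)) ^ k * B) atTop (𝓝 0) := by
    simpa using (tendsto_pow_atTop_nhds_zero_of_lt_one hρt
      (Real.rpow_lt_one hρ0.le hρ1 (NNReal.coe_pos.2 ht))).mul_const B
  refine le_dimH_of_dist_le_mul_rpow (K := K)
    (g := fun z => if hz : z ∈ Ico 0 (x u) then h ⟨(u, z), hz⟩ else 0) hu hK ht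
    (fun z hz => ?_) fun z hz z' hz' => ?_
  · simp only [hz, dif_pos]
    exact (hh ⟨(u, z), hz⟩).1
  · simp only [hz, hz', dif_pos]
    refine ge_of_tendsto' (x := atTop) ?_ fun k => key k ⟨(u, z), hz⟩ ⟨(u, z'), hz'⟩ rfl
    simpa using hlim.const_add (K * |h ⟨(u, z), hz⟩ - h ⟨(u, z'), hz'⟩| ^ (t : ℝ))

theorem continuous_weightMatrix (hr : ∀ u v, E u v → 0 < r u v) (i j : ι) :
    Continuous fun t : ℝ => weightMatrix E r t i j := by
  simp only [weightMatrix, Matrix.of_apply]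
  split_ifs with h
  · exact Real.continuous_const_rpow (hr i j h).ne'
  · exact continuous_const

theorem HasSubinvariantVector.exists_mem_stdSimplex [Fintype ι] {B : Matrix ι ι ℝ}
    (h : HasSubinvariantVector B) : ∃ x ∈ stdSimplex ℝ ι, x ≤ B *ᵥ x := by
  obtain ⟨x, hx0, hxne, hx⟩ := h
  have hpos : 0 < ∑ i, x i := by
    obtain ⟨i, hi⟩ := Function.ne_iff.1 hxne
    exact Finset.sum_pos' (fun i _ => hx0 i) ⟨i, Finset.mem_univ _, (hx0 i).lt_of_ne' hi⟩
  refine ⟨(∑ i, x i)⁻¹ • x, ⟨fun i => mul_nonneg (inv_nonneg.2 hpos.le) (hx0 i), ?_⟩, ?_⟩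
  · simp [← Finset.mul_sum, hpos.ne']
  · rw [Matrix.mulVec_smul]
    exact smul_le_smul_of_nonneg_left hx (inv_nonneg.2 hpos.le)

theorem hasSubinvariantVector_of_mem_stdSimplex [Fintype ι] {B : Matrix ι ι ℝ} {x : ι → ℝ}
    (hx : x ∈ stdSimplex ℝ ι) (h : x ≤ B *ᵥ x) : HasSubinvariantVector B :=
  ⟨x, hx.1, fun h0 => by simpa [h0] using hx.2, h⟩

theorem exists_isGreatest_hasSubinvariantVector [Fintype ι] [Nonempty ι]
    (hr : ∀ u v, E u v → 0 < r u v) (hE : ∀ u, ∃ v, E u v) {M : ℝ}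
    (hM : ∀ t, 0 ≤ t → HasSubinvariantVector (weightMatrix E r t) → t ≤ M) :
    ∃ t, IsGreatest {t : ℝ | 0 ≤ t ∧ HasSubinvariantVector (weightMatrix E r t)} t := by
  have hset : {t : ℝ | 0 ≤ t ∧ HasSubinvariantVector (weightMatrix E r t)} =
      Prod.fst '' ((Icc 0 M ×ˢ stdSimplex ℝ ι) ∩
        {p : ℝ × (ι → ℝ) | p.2 ≤ weightMatrix E r p.1 *ᵥ p.2}) := by
    ext t
    constructor
    · rintro ⟨h0, h⟩
      obtain ⟨x, hx, hle⟩ := h.exists_mem_stdSimplex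
      exact ⟨(t, x), ⟨⟨⟨h0, hM t h0 h⟩, hx⟩, hle⟩, rfl⟩
    · rintro ⟨⟨t, x⟩, ⟨⟨ht, hx⟩, hle⟩, rfl⟩
      exact ⟨ht.1, hasSubinvariantVector_of_mem_stdSimplex hx hle⟩
  refine IsCompact.exists_isGreatest ?_ ⟨0, le_rfl, fun _ => 1, fun _ => zero_le_one, ?_, ?_⟩
  · rw [hset]
    refine ((isCompact_Icc.prod (isCompact_stdSimplex ℝ ι)).inter_right ?_).image continuous_fst
    refine isClosed_le continuous_snd (continuous_pi fun i => ?_)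
    simp only [Matrix.mulVec, dotProduct]
    refine continuous_finsetSum _ fun j _ => ?_
    exact ((continuous_weightMatrix hr i j).comp continuous_fst).mul (by fun_prop)
  · intro h
    simpa using congrFun h (Classical.arbitrary ι)
  · intro u
    obtain ⟨v, huv⟩ := hE u
    have h1 : weightMatrix E r 0 u v * 1 = 1 := by simp [weightMatrix, huv]
    calc (1 : ℝ) = weightMatrix E r 0 u v * 1 := h1.symm
      _ ≤ _ := Finset.single_le_sum (f := fun j => weightMatrix E r 0 u j * (1 : ℝ))
        (fun j _ => mul_nonneg (weightMatrix_nonneg hr 0 u j) zero_le_one) (Finset.mem_univ v)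

/-- Extending a vector on `S` by zero. -/
theorem exists_smul_le_mulVec_of_submatrix [Fintype ι] {B : Matrix ι ι ℝ}
    (hB : ∀ i j, 0 ≤ B i j) (S : Finset ι) {c : ℝ} {x : S → ℝ} (hx0 : 0 ≤ x) (hxne : x ≠ 0)
    (hx : c • x ≤ B.submatrix Subtype.val Subtype.val *ᵥ x) :
    ∃ y : ι → ℝ, 0 ≤ y ∧ y ≠ 0 ∧ c • y ≤ B *ᵥ y := by
  refine ⟨fun i => if h : i ∈ S then x ⟨i, h⟩ else 0, fun i => ?_, fun h0 => hxne ?_, fun i => ?_⟩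
  · simp only [Pi.zero_apply]
    split_ifs with h
    · exact hx0 _
    · exact le_rfl
  · ext i
    simpa using congrFun h0 i.1
  · by_cases h : i ∈ S
    · have h1 := hx ⟨i, h⟩
      simp only [Pi.smul_apply, smul_eq_mul, Matrix.mulVec, dotProduct, Matrix.submatrix_apply,
        h, dif_pos] at h1 ⊢
      refine h1.trans_eq ?_
      rw [← Finset.sum_subset (Finset.subset_univ S) (fun j _ hj => by simp [hj]),
        ← Finset.sum_coe_sort S]
      exact Finset.sum_congr rfl fun j _ => by simp
    · simp only [Pi.smul_apply, h, dif_neg, not_false_eq_true, smul_zero]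
      refine Finset.sum_nonneg fun j _ => mul_nonneg (hB i j) ?_
      dsimp only
      split_ifs with hj
      · exact hx0 _
      · exact le_rfl

theorem hasSubinvariantVector_of_submatrix [Fintype ι] {B : Matrix ι ι ℝ}
    (hB : ∀ i j, 0 ≤ B i j) (S : Finset ι)
    (h : HasSubinvariantVector (B.submatrix (Subtype.val : S → ι) Subtype.val)) :
    HasSubinvariantVector B := by
  obtain ⟨x, hx0, hxne, hx⟩ := h
  obtain ⟨y, hy⟩ := exists_smul_le_mulVec_of_submatrix hB S hx0 hxne (c := 1) (by simpa using hx)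
  exact ⟨y, by simpa using hy⟩

/-- A minimal set of vertices carrying a subinvariant vector is strongly connected. -/
theorem exists_stronglyConnected_hasSubinvariantVector [Fintype ι] {t : ℝ}
    (h : HasSubinvariantVector (weightMatrix E r t)) :
    ∃ S : Finset ι, S.Nonempty ∧
      (∀ u ∈ S, ∀ v ∈ S, Relation.ReflTransGen (fun x y => x ∈ S ∧ y ∈ S ∧ E x y) u v) ∧
      HasSubinvariantVector
        ((weightMatrix E r t).submatrix (Subtype.val : S → ι) Subtype.val) := by
  let P : Finset ι → Prop := fun S => S.Nonempty ∧ ∃ x : ι → ℝ, (∀ i ∈ S, 0 < x i) ∧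
    ∀ i ∈ S, x i ≤ ∑ j ∈ S, weightMatrix E r t i j * x j
  have hP : ∃ S, P S := by
    obtain ⟨x, hx0, hxne, hx⟩ := h
    refine ⟨Finset.univ.filter fun i => 0 < x i, ?_, x, by simp, fun i _ => (hx i).trans_eq ?_⟩
    · obtain ⟨i, hi⟩ := Function.ne_iff.1 hxne
      exact ⟨i, by simpa using (hx0 i).lt_of_ne' hi⟩
    · symm
      refine Finset.sum_subset (Finset.subset_univ _) fun j _ hj => ?_
      have : x j = 0 := le_antisymm (by simpa using hj) (hx0 j)
      rw [this, mul_zero]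
  obtain ⟨S, hS⟩ := exists_minimal_of_wellFoundedLT P hP
  obtain ⟨⟨hne, x, hxpos, hx⟩, hmin⟩ := hS
  refine ⟨S, hne, fun u hu v hv => ?_, fun i => x i.1, fun i => (hxpos _ i.2).le, ?_, fun i => ?_⟩
  · let R := S.filter fun w => Relation.ReflTransGen (fun x y => x ∈ S ∧ y ∈ S ∧ E x y) u w
    have hRS : R ⊆ S := Finset.filter_subset _ _
    have hR : P R := by
      refine ⟨⟨u, Finset.mem_filter.2 ⟨hu, .refl⟩⟩, x, fun i hi => hxpos i (hRS hi),
        fun i hi => (hx i (hRS hi)).trans_eq ?_⟩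
      symm
      refine Finset.sum_subset hRS fun j hj hjR => ?_
      have hij : ¬ E i j := fun hij => hjR (Finset.mem_filter.2
        ⟨hj, (Finset.mem_filter.1 hi).2.tail ⟨hRS hi, hj, hij⟩⟩)
      simp [weightMatrix, hij]
    exact (Finset.mem_filter.1 (hmin hR hRS hv)).2
  · intro h0
    obtain ⟨i, hi⟩ := hne
    exact (hxpos i hi).ne' (congrFun h0 ⟨i, hi⟩)
  · refine (hx i.1 i.2).trans_eq ?_
    rw [← Finset.sum_coe_sort S]
    rfl

theorem exists_gt_hasSubinvariantVector [Fintype ι] (hr : ∀ u v, E u v → 0 < r u v) {t c : ℝ}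
    (hc : 1 < c) {x : ι → ℝ} (hx0 : 0 ≤ x) (hxne : x ≠ 0) (hx : c • x ≤ weightMatrix E r t *ᵥ x) :
    ∃ t' > t, HasSubinvariantVector (weightMatrix E r t') := by
  have hev : ∀ᶠ t' in 𝓝 t, ∀ i j, c⁻¹ * weightMatrix E r t i j ≤ weightMatrix E r t' i j := by
    simp only [eventually_all]
    intro i j
    by_cases hij : E i j
    · have hpos : 0 < weightMatrix E r t i j := by
        simpa [weightMatrix, hij] using Real.rpow_pos_of_pos (hr i j hij) t
      have hlt : c⁻¹ * weightMatrix E r t i j < weightMatrix E r t i j :=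
        mul_lt_of_lt_one_left hpos (inv_lt_one_of_one_lt₀ hc)
      exact ((continuous_weightMatrix hr i j).tendsto t).eventually_const_le hlt
    · simp [weightMatrix, hij]
  obtain ⟨t', ht', htt⟩ :=
    ((hev.filter_mono nhdsWithin_le_nhds).and (self_mem_nhdsWithin (s := Ioi t))).exists
  refine ⟨t', htt, x, hx0, hxne, fun i => ?_⟩
  have h1 : x i ≤ c⁻¹ * ∑ j, weightMatrix E r t i j * x j := by
    rw [le_inv_mul_iff₀ (one_pos.trans hc)]
    exact hx i
  refine h1.trans ?_
  rw [Finset.mul_sum]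
  refine Finset.sum_le_sum fun j _ => ?_
  rw [← mul_assoc]
  exact mul_le_mul_of_nonneg_right (ht' i j) (hx0 j)

end GraphDirected

/-- for a graph-directed construction (not necessarily strongly
connected), the Hausdorff dimension of `K* = ⋃_u C_u` is the supremum of those `t ≥ 0`
for which some strongly connected set `S` of vertices has the spectral radius of the
`S × S` submatrix of `A^t` equal to `1`. -/
theorem stmt12 (n : ℕ) (hn : 1 ≤ n)
    (E : Fin n → Fin n → Prop) (hE : ∀ u, ∃ v, E u v)
    (r a : Fin n → Fin n → ℝ)
    (hr : ∀ u v, E u v → 0 < r u v ∧ r u v < 1)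
    (f : Fin n → Fin n → ℝ → ℝ) (hf : ∀ u v x, f u v x = r u v * x + a u v)
    -- the pairwise disjoint nonempty bounded closed intervals `J_u`
    (c d : Fin n → ℝ) (hJne : ∀ u, c u ≤ d u)
    (hJdisj : ∀ u v, u ≠ v → Disjoint (Icc (c u) (d u)) (Icc (c v) (d v)))
    (hinv : ∀ u, (⋃ (v : Fin n) (_ : E u v), f u v '' Icc (c v) (d v)) ⊆ Icc (c u) (d u))
    (hsep : ∀ u v v', E u v → E u v' → v ≠ v' →
      Disjoint (f u v '' Icc (c v) (d v)) (f u v' '' Icc (c v') (d v')))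
    -- the attractor `(C_1,…,C_n)`
    (C : Fin n → Set ℝ)
    (hC : ∀ u, (C u).Nonempty ∧ IsCompact (C u))
    (hCattr : ∀ u, C u = ⋃ (v : Fin n) (_ : E u v), f u v '' C v) :
    dimH (⋃ u, C u) = ENNReal.ofReal (sSup {t : ℝ | 0 ≤ t ∧
      ∃ S : Finset (Fin n), S.Nonempty ∧
        (∀ u ∈ S, ∀ v ∈ S,
          Relation.ReflTransGen (fun x y => x ∈ S ∧ y ∈ S ∧ E x y) u v) ∧
        spectralRadius ℂ
          (Matrix.of fun i j : {x : Fin n // x ∈ S} =>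
            if E i.1 j.1 then ((r i.1 j.1 ^ t : ℝ) : ℂ) else 0) = 1}) := by
  have hr0 : ∀ u v, E u v → 0 < r u v := fun u v h => (hr u v h).1
  have hne : Nonempty (Fin n) := ⟨⟨0, hn⟩⟩
  obtain rfl : f = fun u v x => r u v * x + a u v := by
    ext u v x
    exact hf u v x
  have hA : IsGraphAttractor E r a C := by
    intro u y
    rw [hCattr u]
    simp
  have hCsub := hA.subset_Icc hr (fun u => (hC u).2) hJne fun u v huv x hx =>
    hinv u (mem_iUnion₂.2 ⟨v, huv, x, hx, rfl⟩)
  have hsep' : ∀ u v v', E u v → E u v' → v ≠ v' →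
      ∀ y ∈ C v, ∀ y' ∈ C v', r u v * y + a u v ≠ r u v' * y' + a u v' :=
    fun u v v' h1 h2 h3 y hy y' hy' heq => Set.disjoint_left.1 (hsep u v v' h1 h2 h3)
      ⟨y, hCsub v hy, rfl⟩ ⟨y', hCsub v' hy', heq.symm⟩
  have hlower : ∀ t, 0 ≤ t → HasSubinvariantVector (weightMatrix E r t) →
      ENNReal.ofReal t ≤ dimH (⋃ u, C u) := by
    rintro t ht ⟨x, hx0, hxne, hx⟩
    obtain rfl | ht := ht.eq_or_lt
    · simp
    obtain ⟨u, hu⟩ := Function.ne_iff.1 hxne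
    lift t to ℝ≥0 using ht.le
    rw [ENNReal.ofReal_coe_nnreal]
    exact (hA.le_dimH hr hC hsep' (NNReal.coe_pos.1 ht) hx ((hx0 u).lt_of_ne' hu)).trans
      (dimH_mono (subset_iUnion C u))
  obtain ⟨t₀, ⟨ht₀, hG⟩, hmax⟩ := exists_isGreatest_hasSubinvariantVector hr0 hE (M := 1)
    fun t ht h => by
      have := (hlower t ht h).trans (dimH_mono (subset_univ _))
      rwa [Real.dimH_univ, ENNReal.ofReal_le_one] at this
  have hmat : ∀ (t : ℝ) (S : Finset (Fin n)),
      (Matrix.of fun i j : {x : Fin n // x ∈ S} =>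
        if E i.1 j.1 then ((r i.1 j.1 ^ t : ℝ) : ℂ) else 0) =
      ((weightMatrix E r t).submatrix (Subtype.val : S → Fin n) Subtype.val).map
        (fun a : ℝ => (a : ℂ)) := by
    intro t S
    ext i j
    simp only [weightMatrix, Matrix.of_apply, Matrix.map_apply, Matrix.submatrix_apply]
    split_ifs <;> simp
  have hsub0 : ∀ (t : ℝ) (S : Finset (Fin n)) (i j : S),
      0 ≤ (weightMatrix E r t).submatrix (Subtype.val : S → Fin n) Subtype.val i j :=
    fun t S i j => weightMatrix_nonneg hr0 t _ _
  have hsup : sSup {t : ℝ | 0 ≤ t ∧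
      ∃ S : Finset (Fin n), S.Nonempty ∧
        (∀ u ∈ S, ∀ v ∈ S,
          Relation.ReflTransGen (fun x y => x ∈ S ∧ y ∈ S ∧ E x y) u v) ∧
        spectralRadius ℂ
          (Matrix.of fun i j : {x : Fin n // x ∈ S} =>
            if E i.1 j.1 then ((r i.1 j.1 ^ t : ℝ) : ℂ) else 0) = 1} = t₀ := by
    refine IsGreatest.csSup_eq ⟨⟨ht₀, ?_⟩, ?_⟩
    · obtain ⟨S, hSne, hconn, hS⟩ := exists_stronglyConnected_hasSubinvariantVector hG
      refine ⟨S, hSne, hconn, ?_⟩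
      rw [hmat]
      have hge := one_le_spectralRadius_of_hasSubinvariantVector (hsub0 t₀ S) hS
      refine le_antisymm (le_of_not_gt fun hlt => ?_) hge
      obtain ⟨c, x, hc, hx0, hxne, hx⟩ := exists_spectralRadius_smul_le_mulVec (hsub0 t₀ S)
        (one_pos.trans hlt).ne'
      rw [hc, ENNReal.one_lt_ofReal] at hlt
      obtain ⟨y, hy0, hyne, hy⟩ := exists_smul_le_mulVec_of_submatrix
        (weightMatrix_nonneg hr0 t₀) S hx0 hxne hx
      obtain ⟨t', htt, ht'⟩ := exists_gt_hasSubinvariantVector hr0 hlt hy0 hyne hy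
      exact htt.not_ge (hmax ⟨ht₀.trans htt.le, ht'⟩)
    · rintro t ⟨ht, S, -, -, hS⟩
      rw [hmat] at hS
      obtain ⟨c, x, hc, hx0, hxne, hx⟩ := exists_spectralRadius_smul_le_mulVec (hsub0 t S)
        (hS ▸ one_ne_zero)
      rw [hS, eq_comm, ENNReal.ofReal_eq_one] at hc
      exact hmax ⟨ht, hasSubinvariantVector_of_submatrix (weightMatrix_nonneg hr0 t) S
        ⟨x, hx0, hxne, by simpa [hc] using hx⟩⟩
  rw [hsup]
  refine le_antisymm ?_ (hlower t₀ ht₀ hG)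
  rw [dimH_iUnion]
  refine iSup_le fun u => le_of_forall_gt fun b hb => ?_
  obtain ⟨t, ht, htb⟩ := ENNReal.lt_iff_exists_nnreal_btwn.1 hb
  refine lt_of_le_of_lt (hA.dimH_le hr (fun u => (hC u).2) ?_ ?_ u) htb
  · exact_mod_cast zero_le.trans_lt ht
  have htt : t₀ < t := by
    rwa [← ENNReal.ofReal_coe_nnreal, ENNReal.ofReal_lt_ofReal_iff_of_nonneg ht₀] at ht
  refine tendsto_pow_mulVec_of_spectralRadius_lt_one (lt_of_not_ge fun hge => htt.not_ge ?_)
  obtain ⟨c, x, hc, hx0, hxne, hx⟩ := exists_spectralRadius_smul_le_mulVec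
    (weightMatrix_nonneg hr0 t) (one_pos.trans_le hge).ne'
  rw [hc, ENNReal.one_le_ofReal] at hge
  refine hmax ⟨t.2, x, hx0, hxne, le_trans (fun i => ?_) hx⟩
  exact le_mul_of_one_le_left (hx0 i) hge
end

section
/- There exist real numbers 1 < β_0 < β_1 such that the function β ↦ dim_H(U^{(β)}) is strictly decreasing on the interval (β_0, β_1), where dim_H denotes Hausdorff dimension and U^{(β)} is the set of x ∈ A_β having exactly one β-expansion. -/
open Set

/-- `d` is a β-expansion of `x`: digits in `{0,…,⌈β⌉−1}` and `x = Σ_{n≥1} d_n β^{-n}`. -/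
def IsBetaExpansion (β : ℝ) (x : ℝ) (d : ℕ → ℤ) : Prop :=
  (∀ n, 0 ≤ d n ∧ d n ≤ ⌈β⌉ - 1) ∧ x = ∑' n : ℕ, (d n : ℝ) / β ^ (n + 1)

/-- The univoque set in base `β`: points of `A_β = [0, (⌈β⌉−1)/(β−1)]` having exactly
one β-expansion. -/
def univoqueSet (β : ℝ) : Set ℝ :=
  {x | x ∈ Icc (0 : ℝ) (((⌈β⌉ : ℝ) - 1) / (β - 1)) ∧ ∃! d : ℕ → ℤ, IsBetaExpansion β x d}

/-- The value `Σ_{n≥1} d_n β^{-n}` of a digit sequence. -/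
noncomputable def betaValue (β : ℝ) (d : ℕ → ℤ) : ℝ := ∑' n : ℕ, (d n : ℝ) / β ^ (n + 1)

theorem hasSum_div_pow_succ {β : ℝ} (hβ : 1 < β) (c : ℝ) :
    HasSum (fun n : ℕ => c / β ^ (n + 1)) (c / (β - 1)) := by
  have h := (hasSum_geometric_of_lt_one (inv_nonneg.2 (by linarith : (0 : ℝ) ≤ β))
    (inv_lt_one_of_one_lt₀ hβ)).mul_left (c / β)
  have h0 : β ≠ 0 := by linarith
  have h1 : β - 1 ≠ 0 := by linarith
  have h2 : c / β * (1 - β⁻¹)⁻¹ = c / (β - 1) := by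
    have h3 : 1 - β⁻¹ = (β - 1) / β := by field_simp
    rw [h3]
    field_simp
  have h4 : (fun n : ℕ => c / β * β⁻¹ ^ n) = fun n : ℕ => c / β ^ (n + 1) := by
    funext n
    rw [inv_pow, pow_succ]
    field_simp
  rwa [h2, h4] at h

theorem summable_digits_div_pow {β : ℝ} (hβ : 1 < β) {a b : ℤ} {d : ℕ → ℤ}
    (hd : ∀ n, a ≤ d n ∧ d n ≤ b) : Summable fun n : ℕ => (d n : ℝ) / β ^ (n + 1) := by
  refine Summable.of_norm_bounded (hasSum_div_pow_succ hβ (|(a : ℝ)| + |(b : ℝ)|)).summable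
    fun n => ?_
  have h1 : (a : ℝ) ≤ d n := by exact_mod_cast (hd n).1
  have h2 : (d n : ℝ) ≤ b := by exact_mod_cast (hd n).2
  have h3 : |(d n : ℝ)| ≤ |(a : ℝ)| + |(b : ℝ)| := by
    rw [abs_le]
    constructor <;> linarith [neg_abs_le (a : ℝ), le_abs_self (b : ℝ), abs_nonneg (a : ℝ),
      abs_nonneg (b : ℝ)]
  have h4 : 0 < β ^ (n + 1) := by positivity
  rw [Real.norm_eq_abs, abs_div, abs_of_pos h4]
  gcongr

theorem betaValue_eq_add_shift {β : ℝ} (hβ : 1 < β) {a b : ℤ} {d : ℕ → ℤ}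
    (hd : ∀ n, a ≤ d n ∧ d n ≤ b) :
    betaValue β d = (d 0 + betaValue β fun n => d (n + 1)) / β := by
  have h0 : β ≠ 0 := by linarith
  rw [betaValue, (summable_digits_div_pow hβ hd).tsum_eq_zero_add, betaValue, add_div,
    ← tsum_div_const]
  simp only [zero_add, pow_one]
  congr 2
  funext n
  rw [pow_succ _ (n + 1)]
  field_simp

theorem le_betaValue {β : ℝ} (hβ : 1 < β) {a b : ℤ} {d : ℕ → ℤ}
    (hd : ∀ n, a ≤ d n ∧ d n ≤ b) : a / (β - 1) ≤ betaValue β d := by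
  refine hasSum_le (fun n => ?_) (hasSum_div_pow_succ hβ a) (summable_digits_div_pow hβ hd).hasSum
  have h1 : (a : ℝ) ≤ d n := by exact_mod_cast (hd n).1
  gcongr

theorem betaValue_le {β : ℝ} (hβ : 1 < β) {a b : ℤ} {d : ℕ → ℤ}
    (hd : ∀ n, a ≤ d n ∧ d n ≤ b) : betaValue β d ≤ b / (β - 1) := by
  refine hasSum_le (fun n => ?_) (summable_digits_div_pow hβ hd).hasSum (hasSum_div_pow_succ hβ b)
  have h1 : (d n : ℝ) ≤ b := by exact_mod_cast (hd n).2
  gcongr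

/-- If `β ≤ M + 1`, every point of `[0, M / (β - 1)]` has an expansion with digits in
`{0, …, M}`. -/
theorem exists_betaValue_eq {β : ℝ} (hβ : 1 < β) {M : ℤ} (hM : β ≤ M + 1) {x : ℝ}
    (hx : x ∈ Icc (0 : ℝ) (M / (β - 1))) :
    ∃ d : ℕ → ℤ, (∀ n, 0 ≤ d n ∧ d n ≤ M) ∧ betaValue β d = x := by
  have hβ1 : 0 < β - 1 := by linarith
  have hM1 : (1 : ℝ) ≤ M / (β - 1) := by rw [le_div_iff₀ hβ1]; linarith
  have hM0 : 0 ≤ M := by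
    have : (0 : ℝ) < M := by linarith
    exact_mod_cast this.le
  have step : ∀ y : Icc (0 : ℝ) (M / (β - 1)), ∃ j : ℤ, (0 ≤ j ∧ j ≤ M) ∧
      β * y - j ∈ Icc (0 : ℝ) (M / (β - 1)) := by
    rintro ⟨y, hy0, hy1⟩
    by_cases h : ⌊β * y⌋ ≤ M
    · refine ⟨⌊β * y⌋, ⟨Int.floor_nonneg.2 (by positivity), h⟩, ?_, ?_⟩
      · linarith [Int.floor_le (β * y)]
      · linarith [Int.lt_floor_add_one (β * y)]
    · refine ⟨M, ⟨hM0, le_rfl⟩, ?_, ?_⟩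
      · have := Int.le_floor.1 (not_le.1 h).le
        simpa using this
      · rw [le_div_iff₀ hβ1] at hy1 ⊢
        nlinarith
  choose j hj hstep using step
  let T : Icc (0 : ℝ) (M / (β - 1)) → Icc (0 : ℝ) (M / (β - 1)) :=
    fun y => ⟨β * y - j y, hstep y⟩
  let o : ℕ → Icc (0 : ℝ) (M / (β - 1)) := fun n => T^[n] ⟨x, hx⟩
  have ho : ∀ n, (o (n + 1) : ℝ) = β * o n - j (o n) := fun n => by
    simp only [o, Function.iterate_succ_apply', T]
  have hd : ∀ n, 0 ≤ j (o n) ∧ j (o n) ≤ M := fun n => hj _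
  refine ⟨fun n => j (o n), hd, ?_⟩
  have hpart : ∀ N, ∑ n ∈ Finset.range N, (j (o n) : ℝ) / β ^ (n + 1) = x - o N / β ^ N := by
    intro N
    induction N with
    | zero => simp [o]
    | succ N ih =>
      rw [Finset.sum_range_succ, ih, ho, pow_succ]
      have : β ≠ 0 := by linarith
      field_simp
      ring
  have hlim : Filter.Tendsto (fun N => x - (o N : ℝ) / β ^ N) Filter.atTop (nhds x) := by
    have h0 : Filter.Tendsto (fun N : ℕ => (M / (β - 1)) / β ^ N) Filter.atTop (nhds 0) :=
      tendsto_const_nhds.div_atTop (tendsto_pow_atTop_atTop_of_one_lt hβ)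
    have h1 : Filter.Tendsto (fun N => (o N : ℝ) / β ^ N) Filter.atTop (nhds 0) := by
      refine squeeze_zero (fun N => ?_) (fun N => ?_) h0
      · have := (o N).2.1
        positivity
      · have := (o N).2.2
        gcongr
    simpa using tendsto_const_nhds.sub h1
  have hs := (summable_digits_div_pow hβ hd).hasSum.tendsto_sum_nat
  simp only [hpart] at hs
  exact tendsto_nhds_unique hs hlim

/-- The digit sequence `d` with digits in `{0, …, M}` is the only one with its value. -/
def IsUniqueExpansion (β : ℝ) (M : ℤ) (d : ℕ → ℤ) : Prop :=
  (∀ n, 0 ≤ d n ∧ d n ≤ M) ∧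
    ∀ e : ℕ → ℤ, (∀ n, 0 ≤ e n ∧ e n ≤ M) → betaValue β e = betaValue β d → e = d

/-- Prepending the digit `j` to a digit sequence. -/
def consDigit (j : ℤ) (d : ℕ → ℤ) : ℕ → ℤ
  | 0 => j
  | n + 1 => d n

theorem consDigit_mem {M j : ℤ} {d : ℕ → ℤ} (hj : 0 ≤ j ∧ j ≤ M)
    (hd : ∀ n, 0 ≤ d n ∧ d n ≤ M) : ∀ n, 0 ≤ consDigit j d n ∧ consDigit j d n ≤ M
  | 0 => hj
  | n + 1 => hd n

theorem betaValue_consDigit {β : ℝ} (hβ : 1 < β) {M j : ℤ} {d : ℕ → ℤ} (hj : 0 ≤ j ∧ j ≤ M)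
    (hd : ∀ n, 0 ≤ d n ∧ d n ≤ M) :
    betaValue β (consDigit j d) = (j + betaValue β d) / β :=
  betaValue_eq_add_shift hβ (consDigit_mem hj hd)

namespace IsUniqueExpansion

variable {β : ℝ} {M : ℤ} {d : ℕ → ℤ}

theorem shift (h : IsUniqueExpansion β M d) (hβ : 1 < β) :
    IsUniqueExpansion β M fun n => d (n + 1) := by
  refine ⟨fun n => h.1 _, fun e he hv => ?_⟩
  have := h.2 (consDigit (d 0) e) (consDigit_mem (h.1 0) he) (by
    rw [betaValue_consDigit hβ (h.1 0) he, hv, ← betaValue_eq_add_shift hβ h.1])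
  funext n
  exact congrFun this (n + 1)

theorem shift_iterate (h : IsUniqueExpansion β M d) (hβ : 1 < β) (k : ℕ) :
    IsUniqueExpansion β M fun n => d (n + k) := by
  induction k with
  | zero => exact h
  | succ k ih =>
    have := ih.shift hβ
    simpa only [add_right_comm, add_assoc] using this

theorem eq_of_betaValue_shift (h : IsUniqueExpansion β M d) (hβ : 1 < β) (hM : β ≤ M + 1)
    {j : ℤ} (hj : 0 ≤ j ∧ j ≤ M)
    (hy : (betaValue β fun n => d (n + 1)) + d 0 - j ∈ Icc (0 : ℝ) (M / (β - 1))) :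
    j = d 0 := by
  obtain ⟨e, he, hv⟩ := exists_betaValue_eq hβ hM hy
  have := h.2 (consDigit j e) (consDigit_mem hj he) (by
    rw [betaValue_consDigit hβ hj he, hv, betaValue_eq_add_shift hβ h.1]
    ring)
  exact congrFun this 0

theorem betaValue_shift_lt (h : IsUniqueExpansion β M d) (hβ : 1 < β) (hM : β ≤ M + 1)
    (h0 : d 0 < M) : (betaValue β fun n => d (n + 1)) < 1 := by
  by_contra! hy
  have hle := betaValue_le hβ fun n => h.1 (n + 1)
  have := h.eq_of_betaValue_shift hβ hM (j := d 0 + 1) ⟨by linarith [(h.1 0).1], h0⟩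
    ⟨by push_cast; linarith, by push_cast; linarith⟩
  omega

theorem lt_betaValue_shift (h : IsUniqueExpansion β M d) (hβ : 1 < β) (hM : β ≤ M + 1)
    (h0 : 0 < d 0) : M / (β - 1) - 1 < betaValue β fun n => d (n + 1) := by
  by_contra! hy
  have hle := le_betaValue hβ fun n => h.1 (n + 1)
  simp only [Int.cast_zero, zero_div] at hle
  have := h.eq_of_betaValue_shift hβ hM (j := d 0 - 1) ⟨by omega, by linarith [(h.1 0).2]⟩
    ⟨by push_cast; linarith, by push_cast; linarith⟩
  omega

/-- For `M < β` close to `M`, a digit `< M` is not followed by the digit `M` in a univoque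
sequence. -/
theorem succ_lt (h : IsUniqueExpansion β M d) (hβ : 1 < β) (hM : β ≤ M + 1)
    (hq : β - M ≤ M / (β - 1) - 1) {n : ℕ} (h0 : d n < M) : d (n + 1) < M := by
  refine lt_of_le_of_ne (h.1 _).2 fun h1 => ?_
  have hn := h.shift_iterate hβ n
  have hn' := hn.shift hβ
  have hM0 : (0 : ℝ) < M := by linarith
  have hlt := hn.betaValue_shift_lt hβ hM (by simpa using h0)
  have hgt := hn'.lt_betaValue_shift hβ hM (by
    simp only [zero_add, add_comm 1 n, h1]; exact_mod_cast hM0)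
  rw [betaValue_eq_add_shift hβ hn'.1, div_lt_one (by linarith)] at hlt
  simp only [zero_add, add_comm 1 n, h1] at hlt
  linarith

/-- For `M < β` close to `M`, a digit `> 0` is not followed by the digit `0` in a univoque
sequence. -/
theorem succ_pos (h : IsUniqueExpansion β M d) (hβ : 1 < β) (hM : β ≤ M + 1)
    (hq : β - M ≤ M / (β - 1) - 1) {n : ℕ} (h0 : 0 < d n) : 0 < d (n + 1) := by
  refine lt_of_le_of_ne (h.1 _).1 fun h1 => ?_
  have hn := h.shift_iterate hβ n
  have hn' := hn.shift hβ
  have hM0 : (0 : ℝ) < M := by linarith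
  have hgt := hn.lt_betaValue_shift hβ hM (by simpa using h0)
  have hlt := hn'.betaValue_shift_lt hβ hM (by
    simp only [zero_add, add_comm 1 n, ← h1]; exact_mod_cast hM0)
  rw [betaValue_eq_add_shift hβ hn'.1, lt_div_iff₀ (by linarith)] at hgt
  simp only [zero_add, add_comm 1 n, ← h1, Int.cast_zero] at hgt
  have h2 : (M : ℝ) / (β - 1) * (β - 1) = M := div_mul_cancel₀ _ (by linarith)
  nlinarith

end IsUniqueExpansion

/-- Values of the digit sequences in `{0, …, 3}` whose digits from index `n` on lie in `{1, 2}`. -/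
def eventuallyInnerSet (β : ℝ) (n : ℕ) : Set ℝ :=
  betaValue β '' {d | (∀ k, 0 ≤ d k ∧ d k ≤ 3) ∧ ∀ k, 1 ≤ d (k + n) ∧ d (k + n) ≤ 2}

theorem dimH_eventuallyInnerSet_le {β : ℝ} (hβ : 1 < β) (n : ℕ) :
    dimH (eventuallyInnerSet β n) ≤ dimH (eventuallyInnerSet β 0) := by
  induction n with
  | zero => exact le_rfl
  | succ n ih =>
    refine le_trans ?_ ih
    have hsub : eventuallyInnerSet β (n + 1) ⊆
        ⋃ j : ℤ, (fun y : ℝ => (j + y) / β) '' eventuallyInnerSet β n := by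
      rintro _ ⟨d, ⟨hd, hd'⟩, rfl⟩
      refine mem_iUnion.2 ⟨d 0, _, ⟨fun k => d (k + 1), ⟨fun k => hd _, fun k => ?_⟩, rfl⟩,
        (betaValue_eq_add_shift hβ hd).symm⟩
      simpa only [add_assoc] using hd' k
    refine (dimH_mono hsub).trans ?_
    rw [dimH_iUnion]
    refine iSup_le fun j => ?_
    have hL : LipschitzWith (Real.toNNReal |β⁻¹|) (fun y : ℝ => (j + y) / β) :=
      LipschitzWith.of_dist_le_mul fun x y => by
        rw [Real.dist_eq, Real.dist_eq, Real.coe_toNNReal _ (abs_nonneg _), ← abs_mul]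
        refine le_of_eq (congrArg _ ?_)
        field_simp
        ring
    exact hL.dimH_image_le _

theorem isBetaExpansion_iff {β : ℝ} (h3 : 3 < β) (h4 : β ≤ 4) {x : ℝ} {d : ℕ → ℤ} :
    IsBetaExpansion β x d ↔ (∀ n, 0 ≤ d n ∧ d n ≤ 3) ∧ x = betaValue β d := by
  have hc : ⌈β⌉ = 4 := by rw [Int.ceil_eq_iff]; norm_num; exact ⟨h3, h4⟩
  simp [IsBetaExpansion, betaValue, hc]

theorem univoqueSet_subset {β : ℝ} (h3 : 3 < β) (h4 : β ≤ 33 / 10) :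
    univoqueSet β ⊆ {betaValue β fun _ => 0, betaValue β fun _ => 3} ∪
      ⋃ n, eventuallyInnerSet β n := by
  rintro x ⟨-, d, hd, hu⟩
  simp only [isBetaExpansion_iff h3 (by linarith : β ≤ 4)] at hd hu
  have h : IsUniqueExpansion β 3 d :=
    ⟨hd.1, fun e he hv => hu e ⟨he, hd.2.trans hv.symm⟩⟩
  have hβ : 1 < β := by linarith
  have hM : β ≤ (3 : ℤ) + 1 := by push_cast; linarith
  have hq : β - (3 : ℤ) ≤ (3 : ℤ) / (β - 1) - 1 := by
    have : β - 2 ≤ 3 / (β - 1) := by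
      rw [le_div_iff₀ (by linarith)]
      nlinarith
    push_cast
    linarith
  by_cases hex : ∃ n, 0 < d n ∧ d n < 3
  · obtain ⟨n, hn⟩ := hex
    refine Or.inr (mem_iUnion.2 ⟨n, d, ⟨hd.1, fun k => ?_⟩, hd.2.symm⟩)
    have : 0 < d (k + n) ∧ d (k + n) < 3 := by
      induction k with
      | zero => simpa using hn
      | succ k ih =>
        rw [add_right_comm]
        exact ⟨h.succ_pos hβ hM hq ih.1, h.succ_lt hβ hM hq ih.2⟩
    omega
  · left
    push Not at hex
    by_cases h0 : 0 < d 0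
    · right
      have : d = fun _ => 3 := by
        funext n
        have : 0 < d n := by
          induction n with
          | zero => exact h0
          | succ n ih => exact h.succ_pos hβ hM hq ih
        exact le_antisymm (hd.1 n).2 (hex n this)
      rw [mem_singleton_iff, hd.2, this]
    · left
      have : d = fun _ => 0 := by
        funext n
        have : d n < 3 := by
          induction n with
          | zero => omega
          | succ n ih => exact h.succ_lt hβ hM hq ih
        by_contra hne
        have := hex n (lt_of_le_of_ne (hd.1 n).1 (Ne.symm hne))
        omega
      rw [hd.2, this]

theorem dimH_univoqueSet_le {β : ℝ} (h3 : 3 < β) (h4 : β ≤ 33 / 10) :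
    dimH (univoqueSet β) ≤ dimH (eventuallyInnerSet β 0) := by
  refine (dimH_mono (univoqueSet_subset h3 h4)).trans ?_
  rw [dimH_union, dimH_iUnion, dimH_finite (by simp)]
  exact max_le zero_le (iSup_le fun n => dimH_eventuallyInnerSet_le (by linarith) n)

theorem eventuallyInnerSet_subset_univoqueSet {β : ℝ} (h3 : 3 < β) (h4 : β ≤ 4) :
    eventuallyInnerSet β 0 ⊆ univoqueSet β := by
  rintro _ ⟨d, ⟨hd, hd'⟩, rfl⟩
  have hβ : 1 < β := by linarith
  have hc : ⌈β⌉ = 4 := by rw [Int.ceil_eq_iff]; norm_num; exact ⟨h3, h4⟩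
  refine ⟨⟨?_, ?_⟩, d, (isBetaExpansion_iff h3 h4).2 ⟨hd, rfl⟩, fun e he => ?_⟩
  · simpa using le_betaValue hβ hd
  · have h := betaValue_le hβ hd
    rw [hc]
    norm_num at h ⊢
    exact h
  · obtain ⟨he, hv⟩ := (isBetaExpansion_iff h3 h4).1 he
    have key : ∀ n, e n = d n ∧
        (betaValue β fun k => d (k + n)) = betaValue β fun k => e (k + n) := by
      have step : ∀ n, (betaValue β fun k => d (k + n)) = (betaValue β fun k => e (k + n)) →
          e n = d n ∧
            (betaValue β fun k => d (k + (n + 1))) = betaValue β fun k => e (k + (n + 1)) := by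
        intro n hn
        rw [betaValue_eq_add_shift hβ fun k => hd (k + n),
          betaValue_eq_add_shift hβ fun k => he (k + n),
          div_left_inj' (by linarith)] at hn
        simp only [zero_add, add_assoc, add_comm 1 n] at hn
        have h1 := le_betaValue hβ fun k => hd' (k + (n + 1))
        have h2 := betaValue_le hβ fun k => hd' (k + (n + 1))
        have h3' := le_betaValue hβ fun k => he (k + (n + 1))
        have h4' := betaValue_le hβ fun k => he (k + (n + 1))
        simp only [add_zero] at h1 h2
        push_cast at h1 h2 h3' h4'
        rw [zero_div] at h3'
        have h5 : 2 / (β - 1) < 1 := by rw [div_lt_one] <;> linarith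
        have h6 : 3 / (β - 1) = 1 / (β - 1) + 2 / (β - 1) := by ring
        have h7 : e n = d n := by
          apply le_antisymm
          · have : (e n : ℝ) < d n + 1 := by linarith
            exact Int.lt_add_one_iff.1 (by exact_mod_cast this)
          · have : (d n : ℝ) < e n + 1 := by linarith
            exact Int.lt_add_one_iff.1 (by exact_mod_cast this)
        refine ⟨h7, ?_⟩
        rw [h7] at hn
        linarith
      have hval : ∀ n, (betaValue β fun k => d (k + n)) = betaValue β fun k => e (k + n) := by
        intro n
        induction n with
        | zero => exact hv
        | succ n ih => exact (step n ih).2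
      exact fun n => ⟨(step n (hval n)).1, hval n⟩
    exact funext fun n => (key n).1

/-- Two sequences over `{1, 2}` that first differ at index `n`: their values in base `γ` are at
distance at most `C γ^{-n}`, those in base `β ≥ 3` at distance at least `c β^{-n}`. -/
theorem abs_betaValue_sub_le_and_le {β γ : ℝ} (hβ : 3 ≤ β) (hγ : 1 < γ) (n : ℕ) {a b : ℕ → ℤ}
    (ha : ∀ k, 1 ≤ a k ∧ a k ≤ 2) (hb : ∀ k, 1 ≤ b k ∧ b k ≤ 2) (heq : ∀ k < n, a k = b k)
    (hne : a n ≠ b n) :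
    |betaValue γ a - betaValue γ b| ≤ 1 / (γ - 1) / γ ^ n ∧
      1 / 2 / β ^ (n + 1) ≤ |betaValue β a - betaValue β b| := by
  induction n generalizing a b with
  | zero =>
    constructor
    · have h1 := le_betaValue hγ ha
      have h2 := betaValue_le hγ ha
      have h3 := le_betaValue hγ hb
      have h4 := betaValue_le hγ hb
      push_cast at h1 h2 h3 h4
      have h5 : 2 / (γ - 1) = 1 / (γ - 1) + 1 / (γ - 1) := by ring
      rw [pow_zero, div_one, abs_le]
      constructor <;> linarith
    · have hβ1 : 1 < β := by linarith
      have h1 := le_betaValue hβ1 fun k => ha (k + 1)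
      have h2 := betaValue_le hβ1 fun k => ha (k + 1)
      have h3 := le_betaValue hβ1 fun k => hb (k + 1)
      have h4 := betaValue_le hβ1 fun k => hb (k + 1)
      push_cast at h1 h2 h3 h4
      have h5 : 2 / (β - 1) = 1 / (β - 1) + 1 / (β - 1) := by ring
      have h6 : 1 / (β - 1) ≤ 1 / 2 := one_div_le_one_div_of_le (by norm_num) (by linarith)
      rw [betaValue_eq_add_shift hβ1 ha, betaValue_eq_add_shift hβ1 hb, ← sub_div, abs_div,
        abs_of_pos (by linarith : 0 < β), zero_add, pow_one]
      gcongr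
      rcases lt_or_gt_of_ne hne with h | h
      · have : (a 0 : ℝ) + 1 ≤ b 0 := by exact_mod_cast h
        exact le_trans (by linarith) (neg_le_abs _)
      · have : (b 0 : ℝ) + 1 ≤ a 0 := by exact_mod_cast h
        exact le_trans (by linarith) (le_abs_self _)
  | succ n ih =>
    obtain ⟨h1, h2⟩ := ih (a := fun k => a (k + 1)) (b := fun k => b (k + 1))
      (fun k => ha _) (fun k => hb _) (fun k hk => heq _ (by omega)) hne
    have h0 : (a 0 : ℝ) = b 0 := by rw [heq 0 (by omega)]
    have hstep : ∀ δ : ℝ, 1 < δ → |betaValue δ a - betaValue δ b| =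
        |(betaValue δ fun k => a (k + 1)) - betaValue δ fun k => b (k + 1)| / δ := by
      intro δ hδ
      rw [betaValue_eq_add_shift hδ ha, betaValue_eq_add_shift hδ hb, h0, ← sub_div, abs_div,
        abs_of_pos (by linarith : 0 < δ), add_sub_add_left_eq_sub]
    rw [hstep γ hγ, hstep β (by linarith), pow_succ γ, pow_succ β (n + 1), ← div_div, ← div_div]
    constructor <;> gcongr

theorem eventuallyInnerSet_zero (β : ℝ) :
    eventuallyInnerSet β 0 = betaValue β '' {d | ∀ k, 1 ≤ d k ∧ d k ≤ 2} := by
  unfold eventuallyInnerSet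
  congr 1
  ext d
  refine ⟨fun h => h.2, fun h => ⟨fun k => ?_, h⟩⟩
  have := h k
  omega

theorem dimH_eventuallyInnerSet_zero_le {β γ : ℝ} (hβ : 3 ≤ β) (hγ : 1 < γ) :
    dimH (eventuallyInnerSet γ 0) ≤
      dimH (eventuallyInnerSet β 0) / (Real.toNNReal (Real.log γ / Real.log β) : NNReal) := by
  have hlβ : 0 < Real.log β := Real.log_pos (by linarith)
  have hlγ : 0 < Real.log γ := Real.log_pos hγ
  set r := Real.log γ / Real.log β with hr
  have hr0 : 0 < r := div_pos hlγ hlβ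
  have hβr : β ^ r = γ := by
    rw [Real.rpow_def_of_pos (by linarith), hr, mul_div_cancel₀ _ hlβ.ne',
      Real.exp_log (by linarith)]
  rw [eventuallyInnerSet_zero, eventuallyInnerSet_zero]
  set D : Set (ℕ → ℤ) := {d | ∀ k, 1 ≤ d k ∧ d k ≤ 2} with hD
  have hdist : ∀ a ∈ D, ∀ b ∈ D, |betaValue γ a - betaValue γ b| ≤
      (γ / (γ - 1) * 2 ^ r) * |betaValue β a - betaValue β b| ^ r := by
    intro a ha b hb
    by_cases hab : a = b
    · subst hab
      simp [Real.zero_rpow hr0.ne']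
    · obtain ⟨m, hm⟩ := Function.ne_iff.1 hab
      classical
      have hex : ∃ n, a n ≠ b n := ⟨m, hm⟩
      obtain ⟨h1, h2⟩ := abs_betaValue_sub_le_and_le hβ hγ (Nat.find hex) ha hb
        (fun k hk => not_not.1 (Nat.find_min hex hk)) (Nat.find_spec hex)
      set n := Nat.find hex
      have hγ1 : 0 < γ - 1 := by linarith
      calc _ ≤ 1 / (γ - 1) / γ ^ n := h1
        _ = (γ / (γ - 1) * 2 ^ r) * (1 / 2 / β ^ (n + 1)) ^ r := by
          rw [Real.div_rpow (by norm_num) (by positivity), Real.div_rpow (by norm_num)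
            (by norm_num), Real.one_rpow, ← Real.rpow_natCast β, ← Real.rpow_mul (by linarith),
            mul_comm _ r, Real.rpow_mul (by linarith), hβr, Real.rpow_natCast, pow_succ]
          have : (2 : ℝ) ^ r ≠ 0 := by positivity
          field_simp
        _ ≤ _ := by
          have := hr0.le
          gcongr
  let f : ℝ → ℝ := fun x => betaValue γ (Function.invFunOn (betaValue β) D x)
  have hf : ∀ a ∈ D, f (betaValue β a) = betaValue γ a := by
    intro a ha
    have hmem : ∃ c ∈ D, betaValue β c = betaValue β a := ⟨a, ha, rfl⟩
    have h := hdist _ (Function.invFunOn_mem hmem) a ha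
    rw [Function.invFunOn_eq hmem, sub_self, abs_zero, Real.zero_rpow hr0.ne', mul_zero] at h
    exact sub_eq_zero.1 (abs_nonpos_iff.1 h)
  have himg : betaValue γ '' D = f '' (betaValue β '' D) := by
    rw [image_image]
    exact image_congr fun a ha => (hf a ha).symm
  rw [himg]
  have hC : 0 ≤ γ / (γ - 1) * 2 ^ r := by
    have : 0 < γ - 1 := by linarith
    positivity
  have hH : HolderOnWith (Real.toNNReal (γ / (γ - 1) * 2 ^ r)) (Real.toNNReal r) f
      (betaValue β '' D) := by
    rintro _ ⟨a, ha, rfl⟩ _ ⟨b, hb, rfl⟩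
    rw [hf a ha, hf b hb, edist_dist, edist_dist, Real.dist_eq, Real.dist_eq,
      Real.coe_toNNReal _ hr0.le, ENNReal.ofReal_rpow_of_nonneg (abs_nonneg _) hr0.le]
    change _ ≤ ENNReal.ofReal _ * _
    rw [← ENNReal.ofReal_mul hC]
    exact ENNReal.ofReal_le_ofReal (hdist a ha b hb)
  exact hH.dimH_image_le (Real.toNNReal_pos.2 hr0)

theorem Icc_subset_eventuallyInnerSet_two : Icc (1 : ℝ) 2 ⊆ eventuallyInnerSet 2 0 := by
  rintro x ⟨hx1, hx2⟩
  obtain ⟨d, hd, hv⟩ := exists_betaValue_eq (β := 2) (M := 1) (x := x - 1) (by norm_num)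
    (by norm_num) ⟨by linarith, by norm_num; linarith⟩
  rw [eventuallyInnerSet_zero]
  refine ⟨fun n => d n + 1, fun k => ?_, ?_⟩
  · have := hd k
    constructor <;> linarith
  · have h1 := (summable_digits_div_pow (β := 2) (by norm_num) hd).hasSum
    have h2 := (h1.add (hasSum_div_pow_succ (β := 2) (by norm_num) 1)).tsum_eq
    have h3 : ∑' n : ℕ, (d n : ℝ) / 2 ^ (n + 1) = x - 1 := hv
    rw [h3] at h2
    norm_num at h2
    rw [← h2, betaValue]
    push_cast
    simp only [add_div, one_div]

theorem dimH_eventuallyInnerSet_zero_ne_zero {β : ℝ} (hβ : 3 ≤ β) :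
    dimH (eventuallyInnerSet β 0) ≠ 0 := by
  intro h0
  have h1 := dimH_eventuallyInnerSet_zero_le hβ (γ := 2) (by norm_num)
  have h2 : dimH (Icc (1 : ℝ) 2) = 1 := by
    rw [Real.dimH_of_nonempty_interior (by simp)]
    simp
  have h3 := h2.symm.le.trans ((dimH_mono Icc_subset_eventuallyInnerSet_two).trans h1)
  rw [h0] at h3
  simp at h3

/-- there is a nonempty open interval `(β₀, β₁) ⊆ (1,∞)` on which the
map `β ↦ dim_H(U^{(β)})` is strictly decreasing. -/
theorem stmt17 :
    ∃ β₀ β₁ : ℝ, 1 < β₀ ∧ β₀ < β₁ ∧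
      StrictAntiOn (fun β => dimH (univoqueSet β)) (Ioo β₀ β₁) := by
  refine ⟨3, 33 / 10, by norm_num, by norm_num, ?_⟩
  rintro β ⟨hβ3, hβ4⟩ γ ⟨hγ3, hγ4⟩ hlt
  have hlβ : 0 < Real.log β := Real.log_pos (by linarith)
  have hr : 1 < Real.log γ / Real.log β := by
    rw [one_lt_div hlβ]
    exact Real.log_lt_log (by linarith) hlt
  calc dimH (univoqueSet γ) ≤ dimH (eventuallyInnerSet γ 0) := dimH_univoqueSet_le hγ3 hγ4.le
    _ ≤ dimH (eventuallyInnerSet β 0) / (Real.toNNReal (Real.log γ / Real.log β) : NNReal) :=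
      dimH_eventuallyInnerSet_zero_le hβ3.le (by linarith)
    _ < dimH (eventuallyInnerSet β 0) := by
      refine ENNReal.div_lt_of_lt_mul ?_
      have hr' : (1 : ENNReal) < (Real.toNNReal (Real.log γ / Real.log β) : NNReal) := by
        exact_mod_cast Real.one_lt_toNNReal.2 hr
      simpa using ENNReal.mul_lt_mul_right (dimH_eventuallyInnerSet_zero_ne_zero hβ3.le)
        (Real.dimH_ne_top _) hr'
    _ ≤ dimH (univoqueSet β) :=
      dimH_mono (eventuallyInnerSet_subset_univoqueSet hβ3 (by linarith))
end
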